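/- arXiv:2505.11226 — 2 statements merged into one kernel-verified Lean document; each statement's English description precedes it below -/
import Mathlib

section
/- Fix an integer n ≥ 1. Let F(Y,X₁,…,Xₙ) ∈ ℤ[Y,X₁,…,Xₙ] be irreducible in ℚ[Y,X₁,…,Xₙ], of total degree D, with deg_Y F ≥ 2, and suppose the coefficient of Y^{deg_Y F} in F (viewed as a polynomial in Y over ℤ[X₁,…,Xₙ]) is a nonzero constant. Then there exists an integer e(n) ≥ 1 depending only on n, and a constant C depending only on n and D, such that N(F,B) ≤ C · (log(‖F‖+2))^{e(n)} · B^{n−1/2} · (log B)^{e(n)} for all real B ≥ 3. -/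
open Polynomial

noncomputable section

/-- The rational function field `ℚ(X₁,…,Xₙ)`. -/
abbrev RF (n : ℕ) := FractionRing (MvPolynomial (Fin n) ℚ)

/-- Base change a polynomial `F ∈ ℤ[Y,X₁,…,Xₙ]` (written as a polynomial in `Y`
with coefficients in `ℤ[X₁,…,Xₙ]`) to `ℚ[Y,X₁,…,Xₙ]`. -/
def toQ {n : ℕ} (F : Polynomial (MvPolynomial (Fin n) ℤ)) :
    Polynomial (MvPolynomial (Fin n) ℚ) :=
  F.map (MvPolynomial.map (Int.castRingHom ℚ))

/-- View a polynomial in `ℚ[X][Y]` as a polynomial in `ℚ(X)[Y]`. -/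
def toFracQ {n : ℕ} (F : Polynomial (MvPolynomial (Fin n) ℚ)) : Polynomial (RF n) :=
  F.map (algebraMap (MvPolynomial (Fin n) ℚ) (RF n))

/-- View a polynomial in `ℤ[X][Y]` as a polynomial in `ℚ(X)[Y]`. -/
def toFrac {n : ℕ} (F : Polynomial (MvPolynomial (Fin n) ℤ)) : Polynomial (RF n) :=
  toFracQ (toQ F)

/-- The degree of `F(Y,X)` in the variable `Xᵢ`. -/
def degX {n : ℕ} {R : Type*} [CommSemiring R]
    (F : Polynomial (MvPolynomial (Fin n) R)) (i : Fin n) : ℕ :=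
  F.support.sup fun k => (F.coeff k).degreeOf i

/-- The total degree of `F(Y,X₁,…,Xₙ)` as a polynomial in `n+1` variables. -/
def totalDeg {n : ℕ} {R : Type*} [CommSemiring R]
    (F : Polynomial (MvPolynomial (Fin n) R)) : ℕ :=
  F.support.sup fun k => k + (F.coeff k).totalDegree

/-- `‖g‖`: the maximum absolute value of a coefficient of `g ∈ ℤ[X₁,…,Xₙ]`. -/
def mvNorm {n : ℕ} (g : MvPolynomial (Fin n) ℤ) : ℕ :=
  g.support.sup fun m => (g.coeff m).natAbs

/-- `‖F‖`: the maximum absolute value of a coefficient of `F ∈ ℤ[Y,X₁,…,Xₙ]`. -/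
def polyNorm {n : ℕ} (F : Polynomial (MvPolynomial (Fin n) ℤ)) : ℕ :=
  F.support.sup fun k => mvNorm (F.coeff k)

/-- The counting function
`N(F,B) = #{x ∈ ℤⁿ ∩ [−B,B]ⁿ : ∃ y ∈ ℤ, F(y,x) = 0}`. -/
def NFB {n : ℕ} (F : Polynomial (MvPolynomial (Fin n) ℤ)) (B : ℝ) : ℕ :=
  Set.ncard {x : Fin n → ℤ | (∀ i, |(x i : ℝ)| ≤ B) ∧
    ∃ y : ℤ, Polynomial.eval y (F.map (MvPolynomial.eval x)) = 0}

/-- `F ∈ ℤ[Y,X₁,…,Xₙ]` is absolutely irreducible: irreducible over `ℚ̄`. -/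
def AbsIrred {n : ℕ} (F : Polynomial (MvPolynomial (Fin n) ℤ)) : Prop :=
  Irreducible (F.map (MvPolynomial.map (Int.castRingHom (AlgebraicClosure ℚ))))

/-- `G` has positive degree in `Y` and in each variable `Xᵢ`. -/
def AllPosDeg {n : ℕ} (G : Polynomial (MvPolynomial (Fin n) ℤ)) : Prop :=
  0 < G.natDegree ∧ ∀ i : Fin n, 0 < degX G i

/-- A field extension `M` of `ℚ(X₁,…,Xₙ)` is an `n`-genuine extension: every
`G ∈ ℤ[Y,X₁,…,Xₙ]` irreducible over `ℚ(X)` with `M ≅ ℚ(X)[Y]/(G)` has positive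
degree in each of `Y, X₁, …, Xₙ`. -/
def IsGenuineExt (n : ℕ) (M : Type*) [Field M] [Algebra (RF n) M] : Prop :=
  ∀ G : Polynomial (MvPolynomial (Fin n) ℤ), Irreducible (toFrac G) →
    Nonempty (AdjoinRoot (toFrac G) ≃ₐ[RF n] M) → AllPosDeg G

/-- A field extension `M` of `ℚ(X₁,…,Xₙ)` is strongly `n`-genuine: every
intermediate field strictly containing `ℚ(X)` is `n`-genuine. -/
def IsStronglyGenuineExt (n : ℕ) (M : Type*) [Field M] [Algebra (RF n) M] : Prop :=
  ∀ M' : IntermediateField (RF n) M, M' ≠ ⊥ → IsGenuineExt n M'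

/-- The extension `ℚ(X)[Y]/(Fq)` presented by `Fq ∈ ℚ[X][Y]` is `n`-genuine. -/
def GenuineExtOfQ {n : ℕ} (Fq : Polynomial (MvPolynomial (Fin n) ℚ)) : Prop :=
  ∀ G : Polynomial (MvPolynomial (Fin n) ℤ), Irreducible (toFrac G) →
    Nonempty (AdjoinRoot (toFrac G) ≃ₐ[RF n] AdjoinRoot (toFracQ Fq)) → AllPosDeg G

/-- The extension `ℚ(X)[Y]/(Fq)` presented by `Fq ∈ ℚ[X][Y]` is strongly
`n`-genuine: for any field `M` isomorphic over `ℚ(X)` to `ℚ(X)[Y]/(Fq)`, every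
intermediate field strictly containing `ℚ(X)` is `n`-genuine. -/
def StronglyGenuineExtOfQ {n : ℕ} (Fq : Polynomial (MvPolynomial (Fin n) ℚ)) : Prop :=
  ∀ (M : Type) [Field M] [Algebra (RF n) M],
    Nonempty (AdjoinRoot (toFracQ Fq) ≃ₐ[RF n] M) → IsStronglyGenuineExt n M

/-- An absolutely irreducible `F ∈ ℤ[Y,X₁,…,Xₙ]` is an `n`-genuine polynomial. -/
def IsGenuinePoly {n : ℕ} (F : Polynomial (MvPolynomial (Fin n) ℤ)) : Prop :=
  AbsIrred F ∧ GenuineExtOfQ (toQ F)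

/-- An absolutely irreducible `F ∈ ℤ[Y,X₁,…,Xₙ]` is a strongly `n`-genuine polynomial. -/
def IsStronglyGenuinePoly {n : ℕ} (F : Polynomial (MvPolynomial (Fin n) ℤ)) : Prop :=
  AbsIrred F ∧ StronglyGenuineExtOfQ (toQ F)

/-- The ring map `ℚ[X₁,…,Xₙ] → ℚ[X₁,…,Xₙ]` induced by the linear substitution
`Xᵢ ↦ Σⱼ σᵢⱼ Xⱼ`. -/
def lsubMv {n : ℕ} (σ : Matrix (Fin n) (Fin n) ℚ) :
    MvPolynomial (Fin n) ℚ →+* MvPolynomial (Fin n) ℚ :=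
  (MvPolynomial.aeval (R := ℚ)
    fun i => ∑ j, MvPolynomial.C (σ i j) * MvPolynomial.X j).toRingHom

/-- `F_σ(Y,X) := F(Y,σ(X))` for a linear change of variables `σ`. -/
def applyGL {n : ℕ} (σ : Matrix (Fin n) (Fin n) ℚ)
    (Fq : Polynomial (MvPolynomial (Fin n) ℚ)) : Polynomial (MvPolynomial (Fin n) ℚ) :=
  Fq.map (lsubMv σ)

/-- `F` is `(1,n)`-allowable: absolutely irreducible, monic in `Y`, and
`ℚ(X)[Y]/(F_σ)` is an `n`-genuine extension for every `σ ∈ GLₙ(ℚ)`. -/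
def IsAllowable {n : ℕ} (F : Polynomial (MvPolynomial (Fin n) ℤ)) : Prop :=
  AbsIrred F ∧ F.Monic ∧
    ∀ σ : Matrix (Fin n) (Fin n) ℚ, IsUnit σ.det → GenuineExtOfQ (applyGL σ (toQ F))

/-- `F` is strongly `(1,n)`-allowable: absolutely irreducible, monic in `Y`, and
`ℚ(X)[Y]/(F_σ)` is a strongly `n`-genuine extension for every `σ ∈ GLₙ(ℚ)`. -/
def IsStronglyAllowable {n : ℕ} (F : Polynomial (MvPolynomial (Fin n) ℤ)) : Prop :=
  AbsIrred F ∧ F.Monic ∧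
    ∀ σ : Matrix (Fin n) (Fin n) ℚ, IsUnit σ.det → StronglyGenuineExtOfQ (applyGL σ (toQ F))

/-- `F` has the form (1.2) with parameter `m`:
`F = Y^{md} + f₁(X) Y^{m(d-1)} + ⋯ + f_{d-1}(X) Y^m + f_d(X)` with `f_d ≠ 0`. -/
def HasForm (n m : ℕ) (F : Polynomial (MvPolynomial (Fin n) ℤ)) : Prop :=
  ∃ (d : ℕ) (f : ℕ → MvPolynomial (Fin n) ℤ), 1 ≤ d ∧ f d ≠ 0 ∧
    F = Polynomial.X ^ (m * d) +
      ∑ j ∈ Finset.Icc 1 d, Polynomial.C (f j) * Polynomial.X ^ (m * (d - j))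

/-- `P` has a linear factor in `Y`: `P = (Y − Q(X))·H̃(Y,X)`. -/
def HasLinearFactorY {n : ℕ} {R : Type*} [CommRing R]
    (P : Polynomial (MvPolynomial (Fin n) R)) : Prop :=
  ∃ (Q : MvPolynomial (Fin n) R) (H : Polynomial (MvPolynomial (Fin n) R)),
    P = (Polynomial.X - Polynomial.C Q) * H

/-- The canonical map `ℚ[X₁,…,Xₙ] → ℚ(X)[Y]/(F)`. -/
def structMap {n : ℕ} (F : Polynomial (MvPolynomial (Fin n) ℤ)) :
    MvPolynomial (Fin n) ℚ →+* AdjoinRoot (toFrac F) :=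
  (algebraMap (RF n) (AdjoinRoot (toFrac F))).comp
    (algebraMap (MvPolynomial (Fin n) ℚ) (RF n))

/-- `z ∈ ℚ(X)[Y]/(F)` lies in the subfield `ℚ((Xᵢ)_{i≠j})`: it can be written
as a quotient of two polynomials not involving `Xⱼ`. -/
def CoordMem {n : ℕ} (j : Fin n) (F : Polynomial (MvPolynomial (Fin n) ℤ))
    (z : AdjoinRoot (toFrac F)) : Prop :=
  ∃ a b : MvPolynomial (Fin n) ℚ,
    MvPolynomial.degreeOf j a = 0 ∧ MvPolynomial.degreeOf j b = 0 ∧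
    structMap F b ≠ 0 ∧ z * structMap F b = structMap F a

/-- `z ∈ ℚ(X)[Y]/(F)` is algebraic over the subfield `ℚ((Xᵢ)_{i≠j})`. -/
def AlgOverCoord {n : ℕ} (j : Fin n) (F : Polynomial (MvPolynomial (Fin n) ℤ))
    (z : AdjoinRoot (toFrac F)) : Prop :=
  ∃ P : Polynomial (AdjoinRoot (toFrac F)), P ≠ 0 ∧ (∀ k, CoordMem j F (P.coeff k)) ∧
    Polynomial.eval z P = 0

/-- Substitute `Xᵢ = xᵢ` for `i ∈ I` into `F`, over `ℚ̄`. -/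
def substSome {n : ℕ} (I : Finset (Fin n)) (x : Fin n → ℚ)
    (F : Polynomial (MvPolynomial (Fin n) ℤ)) :
    Polynomial (MvPolynomial (Fin n) (AlgebraicClosure ℚ)) :=
  (toQ F).map
    ((MvPolynomial.aeval (R := ℚ) fun i =>
      if i ∈ I then MvPolynomial.C (algebraMap ℚ (AlgebraicClosure ℚ) (x i))
      else MvPolynomial.X i).toRingHom)

/-- Substitute `Xᵢ = xᵢ` for all `i ≠ i₀` into `F`, over `ℚ̄`. -/
def substKeepFirst {n : ℕ} (i0 : Fin n) (x : {i : Fin n // i ≠ i0} → ℤ)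
    (F : Polynomial (MvPolynomial (Fin n) ℤ)) :
    Polynomial (MvPolynomial (Fin n) (AlgebraicClosure ℚ)) :=
  F.map
    ((MvPolynomial.aeval (R := ℤ) fun i =>
      if h : i = i0 then (MvPolynomial.X i : MvPolynomial (Fin n) (AlgebraicClosure ℚ))
      else MvPolynomial.C ((x ⟨i, h⟩ : ℤ) : AlgebraicClosure ℚ)).toRingHom)

/-- `‖L‖`: maximum absolute value of an entry of an integer matrix. -/
def matNorm {n : ℕ} (L : Matrix (Fin n) (Fin n) ℤ) : ℕ :=
  Finset.univ.sup fun p : Fin n × Fin n => (L p.1 p.2).natAbs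

/-- The standard additive character `e_p(a) = exp(2πi a/p)` on `ZMod p`. -/
def eZp (p : ℕ) (a : ZMod p) : ℂ :=
  Complex.exp (2 * Real.pi * Complex.I * (a.val : ℂ) / (p : ℂ))

/-!
Clearing the constant leading coefficient, we may assume that `G` is monic in `Y` and has no root
in `ℤ[X₁,…,Xₙ]`. The heart of the matter is to bound by `√L` (up to logarithms) the number of
integers `b` with `|b| ≤ L` for which `G(Y, b, X₁, …)` acquires a root `q_b ∈ ℤ[X₁, …]`.

This uses a `p`-adic determinant method. Up to logarithms, take `p` of size `√L` such that the
`j`-th derivative of `G(Y, b, X₁, …)` in `Y` vanishes at `q_b` while `p` does not divide the next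
one; a logarithmic number of primes serves all `b`. In one residue class modulo `p`, Newton's
iteration puts the pairs `(b, q_b)` on the graph of a polynomial modulo any power of `p`. Hence
evaluating the `2M` monomials `Tᵏ` and `Tᵏ Y` (`k < M`) at `2M` of them gives a determinant
divisible by `p ^ (2M choose 2)`. For `M` of logarithmic size the determinant is smaller than that,
so it vanishes, and all pairs of the class satisfy one relation `A(b) + q_b B(b) = 0`. As `-A / B`
is not a root of `G`, such a relation holds for boundedly many `b` only, up to logarithms.

For several variables, induct on `n`. By the bound above there is a small `b` for which
`G(Y, b, X')` still has no root. If `x'` is not a solvable point of `G(Y, b, X')`, then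
`G(Y, X₀, x')` has no root either, so the fibre over `x'` is bounded by the case of curves, whereas
the solvable points `x'` of `G(Y, b, X')` are counted by induction.
-/

/-! ### Growth and primes -/

theorem exists_forall_mul_pow_mul_two_pow_le (a k r : ℕ) :
    ∃ c ≥ 1, ∀ ℓ ≥ 1, a * (c * ℓ) ^ k * 2 ^ (r * ℓ) ≤ 2 ^ (c * ℓ) := by
  obtain ⟨u₀, hu₀⟩ : ∃ u₀ : ℕ, ∀ u ≥ u₀, a ^ 2 * u ^ (2 * k) ≤ 2 ^ u := by
    have hlim := (tendsto_pow_const_div_const_pow_of_one_lt (2 * k) one_lt_two).const_mul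
      ((a : ℝ) ^ 2)
    rw [mul_zero] at hlim
    obtain ⟨u₀, hu₀⟩ := Filter.eventually_atTop.1 (hlim.eventually (gt_mem_nhds one_pos))
    refine ⟨u₀, fun u hu => ?_⟩
    have := hu₀ u hu
    rw [← mul_div_assoc, div_lt_one (by positivity)] at this
    exact_mod_cast this.le
  refine ⟨u₀ + 2 * r + 1, by lia, fun ℓ hℓ => ?_⟩
  set u := (u₀ + 2 * r + 1) * ℓ
  have hu : u₀ ≤ u := (by lia : u₀ ≤ u₀ + 2 * r + 1).trans (Nat.le_mul_of_pos_right _ hℓ)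
  have hr : r * ℓ * 2 ≤ u :=
    (by lia : r * ℓ * 2 ≤ (2 * r) * ℓ).trans (Nat.mul_le_mul_right ℓ (by lia))
  refine (Nat.pow_le_pow_iff_left two_ne_zero).1 ?_
  calc (a * u ^ k * 2 ^ (r * ℓ)) ^ 2 = a ^ 2 * u ^ (2 * k) * 2 ^ (r * ℓ * 2) := by ring
    _ ≤ 2 ^ u * 2 ^ u := Nat.mul_le_mul (hu₀ u hu) (Nat.pow_le_pow_right two_pos hr)
    _ = (2 ^ u) ^ 2 := by ring

theorem le_mul_primeCounting_add_one {n v : ℕ} (hn : n < 2 ^ v) :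
    n ≤ v * (Nat.primeCounting n + 1) := by
  have hlcm : Nat.lcmUpto n ≤ n ^ Nat.primeCounting n := by
    rcases n.eq_zero_or_pos with rfl | hpos
    · simp [Nat.lcmUpto]
    rw [Nat.lcmUpto_eq_prod_pow_log, ← Nat.primesLE_card_eq_primeCounting]
    exact Finset.prod_le_pow_card _ _ _ fun p _ => Nat.pow_log_le_self p hpos.ne'
  refine (Nat.pow_le_pow_iff_right one_lt_two).1 ?_
  calc 2 ^ n ≤ (n + 1) * Nat.lcmUpto n := Chebyshev.two_pow_le_mul_lcmUpto n
    _ ≤ 2 ^ v * (2 ^ v) ^ Nat.primeCounting n :=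
      Nat.mul_le_mul hn (hlcm.trans (Nat.pow_le_pow_left hn.le _))
    _ = 2 ^ (v * (Nat.primeCounting n + 1)) := by rw [← pow_succ', ← pow_mul]

theorem exists_finset_primes_card_eq {P t v : ℕ} (hv : 1 ≤ v) (h : v * (P + t + 1) < 2 ^ v) :
    ∃ S : Finset ℕ, S.card = t ∧ ∀ p ∈ S, p.Prime ∧ P ≤ p ∧ p ≤ v * (P + t + 1) := by
  have hπ : P + t ≤ Nat.primeCounting (v * (P + t + 1)) :=
    Nat.succ_le_succ_iff.1 (Nat.le_of_mul_le_mul_left (le_mul_primeCounting_add_one h) hv)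
  have hcard : t ≤ (Nat.primesLE (v * (P + t + 1)) \ Finset.range P).card := by
    have := Finset.le_card_sdiff (Finset.range P) (Nat.primesLE (v * (P + t + 1)))
    rw [Nat.primesLE_card_eq_primeCounting, Finset.card_range] at this
    lia
  obtain ⟨S, hS, rfl⟩ := Finset.exists_subset_card_eq hcard
  refine ⟨S, rfl, fun p hp => ?_⟩
  obtain ⟨⟨hle, hprime⟩, hge⟩ := by simpa [Nat.mem_primesLE] using hS hp
  exact ⟨hprime, hge, hle⟩

/-! ### Determinants -/

theorem choose_two_le_sum_of_injective {ι : Type*} [Fintype ι] {m : ι → ℕ}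
    (hm : Function.Injective m) : (Fintype.card ι).choose 2 ≤ ∑ i, m i := by
  have h := Finset.sum_range_le_sum (s := Finset.univ.map (⟨fun i => (m i : ℤ),
    Nat.cast_injective.comp hm⟩ : ι ↪ ℤ)) (c := 0) (by simp)
  simp only [Finset.card_map, Finset.card_univ, Finset.sum_map, zero_add,
    Function.Embedding.coeFn_mk] at h
  rw [Nat.choose_two_right, ← Finset.sum_range_id]
  rw [← Nat.cast_sum, ← Nat.cast_sum] at h
  exact_mod_cast h

theorem pow_choose_two_dvd_det_eval {S ι : Type*} [CommRing S] [Fintype ι] [DecidableEq ι]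
    (π : S) (w : ι → S[X]) (t : ι → S) :
    π ^ (Fintype.card ι).choose 2 ∣ (Matrix.of fun i j => (w j).eval (π * t i)).det := by
  set N := Finset.univ.sup (fun j => (w j).natDegree) + 1
  have hw (j x) : (w j).eval x = ∑ m ∈ Finset.range N, (w j).coeff m * x ^ m :=
    eval_eq_sum_range' (Nat.lt_succ_of_le
      (Finset.le_sup (f := fun j => (w j).natDegree) (Finset.mem_univ j))) x
  have hexpand : (Matrix.of fun i j => (w j).eval (π * t i)).det =
      Matrix.detRowAlternating.toMultilinearMap
        fun j => ∑ m ∈ Finset.range N, ((w j).coeff m * π ^ m) • fun i => t i ^ m := by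
    rw [← Matrix.det_transpose]
    refine congrArg Matrix.det (Matrix.ext fun j i => ?_)
    simp only [Matrix.transpose_apply, Matrix.of_apply, hw, Finset.sum_apply, Pi.smul_apply,
      smul_eq_mul, mul_pow, mul_assoc]
  rw [hexpand, MultilinearMap.map_sum_finset]
  refine Finset.dvd_sum fun r _ => ?_
  rw [MultilinearMap.map_smul_univ, Finset.prod_mul_distrib, Finset.prod_pow_eq_pow_sum,
    smul_eq_mul]
  by_cases hr : Function.Injective r
  · exact ((pow_dvd_pow π (choose_two_le_sum_of_injective hr)).mul_left _).mul_right _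
  · obtain ⟨i, j, hij, hne⟩ := Function.not_injective_iff.1 hr
    have hzero : Matrix.detRowAlternating.toMultilinearMap (fun i k => t k ^ r i) = 0 :=
      Matrix.detRowAlternating.map_eq_zero_of_eq _ (by simp only [hij]) hne
    rw [hzero, mul_zero]
    exact dvd_zero _

theorem dvd_det_sub_det {S ι : Type*} [CommRing S] [Fintype ι] [DecidableEq ι] {d : S}
    {A B : Matrix ι ι S} (h : ∀ i j, d ∣ A i j - B i j) : d ∣ A.det - B.det := by
  simp only [← Ideal.mem_span_singleton, ← Ideal.Quotient.mk_eq_mk_iff_sub_mem] at h ⊢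
  rw [RingHom.map_det, RingHom.map_det]
  exact congrArg Matrix.det (Matrix.ext h)

theorem abs_det_le_factorial_mul_prod {ι : Type*} [Fintype ι] [DecidableEq ι]
    {A : Matrix ι ι ℤ} {c : ι → ℤ} (h : ∀ i j, |A i j| ≤ c j) :
    |A.det| ≤ (Fintype.card ι).factorial * ∏ j, c j := by
  rw [Matrix.det_apply]
  have hterm (σ : Equiv.Perm ι) : |Equiv.Perm.sign σ • ∏ i, A (σ i) i| ≤ ∏ j, c j := by
    rw [Units.smul_def, smul_eq_mul, abs_mul, Int.isUnit_iff_abs_eq.1 (Units.isUnit _),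
      one_mul, Finset.abs_prod]
    exact Finset.prod_le_prod (fun _ _ => abs_nonneg _) fun j _ => h _ j
  refine (Finset.abs_sum_le_sum_abs _ _).trans
    ((Finset.sum_le_card_nsmul _ _ _ fun σ _ => hterm σ).trans_eq ?_)
  rw [Finset.card_univ, Fintype.card_perm, nsmul_eq_mul]

theorem exists_mulVec_eq_zero_of_forall_det_submatrix_eq_zero {R ι κ : Type*} [CommRing R]
    [IsDomain R] [Fintype ι] [DecidableEq ι] [Finite κ] {A : Matrix κ ι R}
    (h : ∀ β : ι → κ, (A.submatrix β id).det = 0) : ∃ v ≠ 0, A.mulVec v = 0 := by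
  have := Fintype.ofFinite κ
  let K := FractionRing R
  let φ := algebraMap R K
  have hφ : Function.Injective φ := IsFractionRing.injective R K
  by_contra! hker
  have hcol : LinearIndependent R (A.map φ).col := Fintype.linearIndependent_iff.2 fun v hv => by
    refine congrFun (by_contra fun hne => hker v hne (funext fun k => hφ ?_))
    simpa [Matrix.mulVec, dotProduct, Algebra.smul_def, φ, mul_comm] using congrFun hv k
  have hrank : (A.map φ).rank = Fintype.card ι := by
    rw [← Matrix.rank_transpose]
    exact ((LinearIndependent.iff_fractionRing R K).1 hcol).rank_matrix
  obtain ⟨κ', β, -, hspan, hli⟩ := exists_linearIndependent' K (A.map φ).row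
  have := hli.finite
  have := Fintype.ofFinite κ'
  have hcard : Fintype.card κ' = Fintype.card ι := by
    rw [← hrank, Matrix.rank_eq_finrank_span_row, ← hspan, finrank_span_eq_card hli]
  let e := Fintype.equivOfCardEq hcard.symm
  have hunit : IsUnit ((A.submatrix (β ∘ e) id).map φ) :=
    Matrix.linearIndependent_rows_iff_isUnit.1 (hli.comp e e.injective)
  rw [Matrix.isUnit_iff_isUnit_det, ← RingHom.mapMatrix_apply, ← RingHom.map_det, h,
    map_zero] at hunit
  exact not_isUnit_zero hunit

/-! ### Plane curves modulo a prime -/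

theorem evalEval_eq_eval_map {S : Type*} [CommSemiring S] (f : S[X][X]) (b y : S) :
    f.evalEval b y = (f.map (evalRingHom b)).eval y := by
  rw [map_evalRingHom_eval]

theorem eval_eval_eq_evalEval {S : Type*} [CommRing S] (f : S[X][X]) (g : S[X]) (b : S) :
    (f.eval g).eval b = f.evalEval b (g.eval b) := by
  rw [evalEval_eq_eval_map, eval_map, ← coe_evalRingHom, eval₂_at_apply, coe_evalRingHom]

theorem dvd_evalEval_sub_evalEval {S : Type*} [CommRing S] {d : S} (f : S[X][X]) {b b' y y' : S}
    (hb : d ∣ b - b') (hy : d ∣ y - y') : d ∣ f.evalEval b y - f.evalEval b' y' := by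
  rw [← sub_add_sub_cancel _ (f.evalEval b y')]
  refine dvd_add ?_ (hb.trans (sub_dvd_eval_sub b b' _))
  rw [evalEval_eq_eval_map, evalEval_eq_eval_map]
  exact hy.trans (sub_dvd_eval_sub y y' _)

/- Newton's iteration, with the derivative frozen at the base point. -/
theorem exists_forall_pow_dvd_sub_eval {S : Type*} [CommRing S] {π b₀ y₀ : S} {f : S[X][X]}
    (hunit : IsUnit ((derivative f).evalEval b₀ y₀)) (k : ℕ) :
    ∃ g : S[X], ∀ b y : S, π ∣ b - b₀ → π ∣ y - y₀ → f.evalEval b y = 0 →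
      π ^ (k + 1) ∣ y - g.eval b := by
  obtain ⟨u, hu⟩ := hunit.exists_left_inv
  induction k with
  | zero => exact ⟨C y₀, fun b y _ hy _ => by simpa using hy⟩
  | succ k ih =>
    obtain ⟨g, hg⟩ := ih
    refine ⟨g - C u * f.eval g, fun b y hb hy hf => ?_⟩
    obtain ⟨e, he⟩ := hg b y hb hy hf
    have hgy : π ∣ g.eval b - y₀ := by
      rw [show g.eval b - y₀ = y - y₀ - (y - g.eval b) by ring, he, pow_succ']
      exact dvd_sub hy ((dvd_mul_right π _).mul_right e)
    obtain ⟨c, hc⟩ := dvd_evalEval_sub_evalEval (derivative f) hb hgy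
    obtain ⟨z, hz⟩ := binomExpansion (f.map (evalRingHom b)) (g.eval b) (y - g.eval b)
    rw [add_sub_cancel, derivative_map] at hz
    simp only [← evalEval_eq_eval_map, hf] at hz
    rw [eval_sub, eval_mul, eval_C, eval_eval_eq_evalEval]
    have hnewton : y - (g.eval b - u * f.evalEval b (g.eval b)) =
        -(u * z * (y - g.eval b) ^ 2 + u * π * c * (y - g.eval b)) := by
      linear_combination (-(y - g.eval b)) * hu - u * hz - u * (y - g.eval b) * hc
    rw [hnewton, he]
    exact ⟨-(u * z * e ^ 2 * π ^ k + u * c * e), by ring⟩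

section

variable {R ι : Type*} [CommRing R] [Fintype ι] [DecidableEq ι]

theorem pow_choose_two_dvd_det_evalEval_of_isUnit {p b₀ y₀ : R} {f : R[X][X]}
    (hunit : IsUnit ((derivative f).evalEval b₀ y₀)) (w : ι → R[X][X]) {b y : ι → R}
    (hb : ∀ i, p ∣ b i - b₀) (hy : ∀ i, p ∣ y i - y₀) (hf : ∀ i, f.evalEval (b i) (y i) = 0) :
    p ^ (Fintype.card ι).choose 2 ∣ (Matrix.of fun i j => (w j).evalEval (b i) (y i)).det := by
  obtain ⟨g, hg⟩ := exists_forall_pow_dvd_sub_eval (π := p) hunit ((Fintype.card ι).choose 2)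
  choose t ht using hb
  have hb' (i) : b i = p * t i + b₀ := by rw [← ht, sub_add_cancel]
  refine (dvd_iff_dvd_of_dvd_sub (dvd_det_sub_det fun i j => ?_)).2
    (pow_choose_two_dvd_det_eval p (fun j => ((w j).eval g).comp (X + C b₀)) t)
  simp only [Matrix.of_apply, eval_comp, eval_add, eval_X, eval_C, ← hb',
    eval_eval_eq_evalEval _ g]
  exact dvd_evalEval_sub_evalEval _ (by rw [sub_self]; exact dvd_zero _)
    ((pow_dvd_pow p (Nat.le_succ _)).trans (hg _ _ ⟨t i, ht i⟩ (hy i) (hf i)))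

/- Inverting the value of the derivative reduces to the unit case, and `p` does not divide the
denominators this introduces. -/
theorem pow_choose_two_dvd_det_evalEval [IsDomain R] {p b₀ y₀ : R} (hp : Prime p) {f : R[X][X]}
    (hu : ¬ p ∣ (derivative f).evalEval b₀ y₀) (w : ι → R[X][X]) {b y : ι → R}
    (hb : ∀ i, p ∣ b i - b₀) (hy : ∀ i, p ∣ y i - y₀) (hf : ∀ i, f.evalEval (b i) (y i) = 0) :
    p ^ (Fintype.card ι).choose 2 ∣ (Matrix.of fun i j => (w j).evalEval (b i) (y i)).det := by
  set u := (derivative f).evalEval b₀ y₀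
  set A := Matrix.of fun i j => (w j).evalEval (b i) (y i)
  let S := Localization.Away u
  let φ := algebraMap R S
  have hmap (f : R[X][X]) (x z : R) :
      (f.map (mapRingHom φ)).evalEval (φ x) (φ z) = φ (f.evalEval x z) :=
    map_mapRingHom_evalEval φ f x z
  have hlocal : φ p ^ (Fintype.card ι).choose 2 ∣ φ A.det := by
    have := pow_choose_two_dvd_det_evalEval_of_isUnit (p := φ p) (b₀ := φ b₀) (y₀ := φ y₀)
      (f := f.map (mapRingHom φ)) (b := φ ∘ b) (y := φ ∘ y)
      (by rw [derivative_map, hmap]; exact IsLocalization.Away.algebraMap_isUnit u)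
      (fun j => (w j).map (mapRingHom φ))
      (fun i => by simpa using map_dvd φ (hb i)) (fun i => by simpa using map_dvd φ (hy i))
      (fun i => by simp only [Function.comp_apply, hmap, hf, map_zero])
    simp only [Function.comp_apply, hmap] at this
    rwa [RingHom.map_det]
  obtain ⟨z, hz⟩ := hlocal
  obtain ⟨⟨r, _, k, rfl⟩, hrs⟩ := IsLocalization.surj (Submonoid.powers u) z
  have hclear : u ^ k * A.det = p ^ (Fintype.card ι).choose 2 * r := by
    have hu0 : u ≠ 0 := fun h => hu (h ▸ dvd_zero p)
    refine IsLocalization.injective S (powers_le_nonZeroDivisors_of_noZeroDivisors hu0) ?_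
    rw [map_mul, map_mul, map_pow _ p, ← hrs]
    linear_combination φ (u ^ k) * hz
  exact hp.pow_dvd_of_dvd_mul_left _ (fun h => hu (hp.dvd_of_dvd_pow h)) ⟨r, hclear⟩

end

theorem eval_scaleRoots_ne_zero {S : Type*} [CommRing S] [IsDomain S] [IsIntegrallyClosed S]
    {F : S[X]} (hF : F.Monic) (hroot : ∀ r, F.eval r ≠ 0) {b : S} (hb : b ≠ 0) (a : S) :
    (F.scaleRoots b).eval a ≠ 0 := by
  intro hzero
  let K := FractionRing S
  let φ := algebraMap S K
  have hφ : Function.Injective φ := IsFractionRing.injective S K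
  have hφb : φ b ≠ 0 := (map_ne_zero_iff φ hφ).2 hb
  have hquot : eval₂ φ (φ a / φ b) F = 0 := by
    have := scaleRoots_eval₂_mul (p := F) φ (φ a / φ b) b
    rw [mul_div_cancel₀ _ hφb, eval₂_at_apply, hzero, map_zero] at this
    exact (mul_eq_zero.1 this.symm).resolve_left (pow_ne_zero _ hφb)
  obtain ⟨r, hr⟩ := IsIntegrallyClosed.isIntegral_iff.1 (⟨F, hF, hquot⟩ : IsIntegral S (φ a / φ b))
  rw [← hr, eval₂_at_apply] at hquot
  exact hroot r (hφ (hquot.trans (map_zero φ).symm))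

theorem natDegree_eval_scaleRoots_le {S : Type*} [CommRing S] {F : S[X][X]} {D M : ℕ}
    (hcoeff : ∀ j, (F.coeff j).natDegree ≤ D) {A B : S[X]} (hA : A.natDegree ≤ M)
    (hB : B.natDegree ≤ M) :
    ((F.scaleRoots B).eval A).natDegree ≤ D + F.natDegree * M := by
  rw [eval_eq_sum_range, natDegree_scaleRoots]
  refine natDegree_sum_le_of_forall_le _ _ fun i hi => ?_
  have hi : i ≤ F.natDegree := Finset.mem_range_succ_iff.1 hi
  rw [coeff_scaleRoots, mul_assoc]
  calc (F.coeff i * (B ^ (F.natDegree - i) * A ^ i)).natDegree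
      ≤ D + ((F.natDegree - i) * M + i * M) :=
        natDegree_mul_le.trans (add_le_add (hcoeff i) (natDegree_mul_le.trans
          (add_le_add (natDegree_pow_le_of_le _ hB) (natDegree_pow_le_of_le _ hA))))
    _ = D + F.natDegree * M := by rw [← add_mul, Nat.sub_add_cancel hi]

theorem card_le_natDegree_of_forall_eval_eq_zero {R : Type*} [CommRing R] [IsDomain R] {G : R[X]}
    (hG : G ≠ 0) {T : Finset R} (hT : ∀ b ∈ T, G.eval b = 0) : T.card ≤ G.natDegree :=
  (Multiset.card_le_card ((Multiset.le_iff_subset T.nodup).2 fun b hb =>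
    (mem_roots hG).2 (hT b hb))).trans (card_roots' G)

theorem card_le_of_forall_eval_add_mul_eval_eq_zero {R : Type*} [CommRing R] [IsDomain R]
    [IsIntegrallyClosed R] {F : R[X][X]} (hF : F.Monic) (hroot : ∀ r, F.eval r ≠ 0) {D M : ℕ}
    (hcoeff : ∀ j, (F.coeff j).natDegree ≤ D) {A B : R[X]} (hA : A.natDegree ≤ M)
    (hB : B.natDegree ≤ M) (hAB : A ≠ 0 ∨ B ≠ 0) {T : Finset R}
    (hT : ∀ b ∈ T, ∃ y, F.evalEval b y = 0 ∧ A.eval b + y * B.eval b = 0) :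
    T.card ≤ D + F.natDegree * M + M := by
  by_cases hB0 : B = 0
  · have hA0 : A ≠ 0 := hAB.resolve_right (not_not.2 hB0)
    refine (card_le_natDegree_of_forall_eval_eq_zero hA0 fun b hb => ?_).trans (by lia)
    obtain ⟨y, -, h⟩ := hT b hb
    simpa [hB0] using h
  have hres : ∀ b ∈ T, ((F.scaleRoots B).eval (-A)).eval b = 0 := fun b hb => by
    obtain ⟨y, hy, hline⟩ := hT b hb
    have hmap : (F.scaleRoots B).map (evalRingHom b) =
        (F.map (evalRingHom b)).scaleRoots (B.eval b) :=
      map_scaleRoots _ _ _ (by rw [hF.leadingCoeff, map_one]; exact one_ne_zero)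
    have hscale := scaleRoots_eval₂_mul (p := F.map (evalRingHom b)) (RingHom.id R) y (B.eval b)
    rw [eval₂_id, eval₂_id, ← evalEval_eq_eval_map, hy, mul_zero] at hscale
    rwa [eval_eval_eq_evalEval, evalEval_eq_eval_map, hmap, eval_neg,
      show -A.eval b = B.eval b * y by linear_combination -hline]
  have hdeg := natDegree_eval_scaleRoots_le hcoeff ((natDegree_neg A).trans_le hA) hB
  have := card_le_natDegree_of_forall_eval_eq_zero
    (eval_scaleRoots_ne_zero hF hroot hB0 (-A)) hres
  lia

/-- The monomials `X ^ k` and `X ^ k * Y` with `k < M`, which index the columns of the interpolation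
determinants. -/
def lowMonomial (R : Type*) [CommRing R] (M : ℕ) : Fin M ⊕ Fin M → R[X][X] :=
  Sum.elim (fun k => C (X ^ (k : ℕ))) fun k => C (X ^ (k : ℕ)) * X

theorem evalEval_lowMonomial_inl {R : Type*} [CommRing R] {M : ℕ} (k : Fin M) (b y : R) :
    (lowMonomial R M (.inl k)).evalEval b y = b ^ (k : ℕ) := by
  simp [lowMonomial, evalEval_C]

theorem evalEval_lowMonomial_inr {R : Type*} [CommRing R] {M : ℕ} (k : Fin M) (b y : R) :
    (lowMonomial R M (.inr k)).evalEval b y = b ^ (k : ℕ) * y := by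
  simp [lowMonomial, evalEval_C]

theorem exists_eval_add_mul_eval_eq_sum {R : Type*} [CommRing R] {M : ℕ} {v : Fin M ⊕ Fin M → R}
    (hv : v ≠ 0) : ∃ A B : R[X], A.natDegree ≤ M ∧ B.natDegree ≤ M ∧ (A ≠ 0 ∨ B ≠ 0) ∧
      ∀ b y, A.eval b + y * B.eval b = ∑ j, (lowMonomial R M j).evalEval b y * v j := by
  let P (u : Fin M → R) : R[X] := ∑ k, C (u k) * X ^ (k : ℕ)
  have hdeg (u) : (P u).natDegree ≤ M := natDegree_sum_le_of_forall_le _ _ fun k _ =>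
    (natDegree_C_mul_X_pow_le _ _).trans k.2.le
  have hcoeff (u) (k : Fin M) : (P u).coeff k = u k := by
    simp [P, Fin.val_inj]
  refine ⟨P (v ∘ .inl), P (v ∘ .inr), hdeg _, hdeg _, ?_, fun b y => ?_⟩
  · by_contra! h
    refine hv (funext (Sum.rec (fun k => ?_) fun k => ?_))
    · simpa [h.1] using (hcoeff (v ∘ .inl) k).symm
    · simpa [h.2] using (hcoeff (v ∘ .inr) k).symm
  · simp only [P, Function.comp_apply, eval_finsetSum, eval_mul, eval_C, eval_pow, eval_X,
      Fintype.sum_sum_type, evalEval_lowMonomial_inl, evalEval_lowMonomial_inr, Finset.mul_sum]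
    congr 1 <;> exact Finset.sum_congr rfl fun k _ => by ring

theorem card_le_of_forall_det_lowMonomial_eq_zero {R κ : Type*} [CommRing R] [IsDomain R]
    [IsIntegrallyClosed R] [Fintype κ] {F : R[X][X]} (hF : F.Monic) (hroot : ∀ r, F.eval r ≠ 0)
    {D M : ℕ} (hcoeff : ∀ j, (F.coeff j).natDegree ≤ D) {b y : κ → R} (hb : Function.Injective b)
    (hzero : ∀ k, F.evalEval (b k) (y k) = 0)
    (hdet : ∀ β : Fin M ⊕ Fin M → κ,
      (Matrix.of fun i j => (lowMonomial R M j).evalEval (b (β i)) (y (β i))).det = 0) :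
    Fintype.card κ ≤ D + F.natDegree * M + M := by
  obtain ⟨v, hv, hker⟩ := exists_mulVec_eq_zero_of_forall_det_submatrix_eq_zero
    (A := Matrix.of fun k j => (lowMonomial R M j).evalEval (b k) (y k)) hdet
  obtain ⟨A, B, hA, hB, hAB, hsum⟩ := exists_eval_add_mul_eval_eq_sum hv
  rw [← Finset.card_univ, ← Finset.card_map ⟨b, hb⟩]
  refine card_le_of_forall_eval_add_mul_eval_eq_zero hF hroot hcoeff hA hB hAB fun x hx => ?_
  obtain ⟨k, -, rfl⟩ := Finset.mem_map.1 hx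
  exact ⟨y k, hzero k, (hsum _ _).trans (congrFun hker k)⟩

/-! ### Polynomials bounded on a box -/

/-- `g` takes values of absolute value at most `Z` at the integer points of `[-T, T] ^ σ`. -/
def BoundedOnBox {σ : Type*} (T Z : ℕ) (g : MvPolynomial σ ℤ) : Prop :=
  ∀ x : σ → ℤ, (∀ i, |x i| ≤ T) → |MvPolynomial.eval x g| ≤ Z

namespace BoundedOnBox

variable {σ : Type*} {T Z Z' : ℕ} {g g' : MvPolynomial σ ℤ}

theorem mono (hg : BoundedOnBox T Z g) (h : Z ≤ Z') : BoundedOnBox T Z' g := fun x hx =>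
  (hg x hx).trans (by exact_mod_cast h)

theorem mul (hg : BoundedOnBox T Z g) (hg' : BoundedOnBox T Z' g') :
    BoundedOnBox T (Z * Z') (g * g') := fun x hx => by
  rw [map_mul, abs_mul, Nat.cast_mul]
  exact mul_le_mul (hg x hx) (hg' x hx) (abs_nonneg _) (Nat.cast_nonneg _)

theorem pow (hg : BoundedOnBox T Z g) (k : ℕ) : BoundedOnBox T (Z ^ k) (g ^ k) := fun x hx => by
  rw [map_pow, abs_pow, Nat.cast_pow]
  exact pow_le_pow_left₀ (abs_nonneg _) (hg x hx) k

theorem intCast {b : ℤ} (hb : |b| ≤ Z) : BoundedOnBox T Z (b : MvPolynomial σ ℤ) := fun x _ => by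
  rwa [map_intCast]

theorem X (i : σ) : BoundedOnBox T T (MvPolynomial.X i) := fun x hx => by
  rw [MvPolynomial.eval_X]
  exact hx i

theorem det {ι : Type*} [Fintype ι] [DecidableEq ι] {A : Matrix ι ι (MvPolynomial σ ℤ)}
    {c : ι → ℕ} (h : ∀ i j, BoundedOnBox T (c j) (A i j)) :
    BoundedOnBox T ((Fintype.card ι).factorial * ∏ j, c j) A.det := fun x hx => by
  rw [RingHom.map_det]
  exact_mod_cast abs_det_le_factorial_mul_prod fun i j => h i j x hx

/- The box contains more points in each direction than the degree of `g`. -/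
theorem eq_zero_of_forall_dvd_eval [Finite σ] {d : ℕ} (hg : BoundedOnBox T Z g)
    (hdeg : g.totalDegree ≤ T) (hd : Z < d) (h : ∀ x, (d : ℤ) ∣ MvPolynomial.eval x g) :
    g = 0 := by
  refine MvPolynomial.eq_zero_of_eval_zero_at_prod_finset g (fun _ => Finset.Icc 0 (T : ℤ))
    (fun i => ?_) fun x hx => ?_
  · have := g.degreeOf_le_totalDegree i
    rw [Int.card_Icc]
    lia
  · refine Int.eq_zero_of_abs_lt_dvd (h x) ((hg x fun i => ?_).trans_lt (by exact_mod_cast hd))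
    obtain ⟨h0, hT⟩ := Finset.mem_Icc.1 (hx i)
    rwa [abs_of_nonneg h0]

end BoundedOnBox

theorem totalDegree_intCast {σ R : Type*} [CommRing R] (b : ℤ) :
    (b : MvPolynomial σ R).totalDegree = 0 := by
  rw [← map_intCast (MvPolynomial.C : R →+* MvPolynomial σ R), MvPolynomial.totalDegree_C]

theorem totalDegree_det_le {σ R ι : Type*} [CommRing R] [Fintype ι] [DecidableEq ι]
    {A : Matrix ι ι (MvPolynomial σ R)} {D : ℕ} (h : ∀ i j, (A i j).totalDegree ≤ D) :
    A.det.totalDegree ≤ Fintype.card ι * D := by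
  rw [Matrix.det_apply]
  refine MvPolynomial.totalDegree_finsetSum_le fun τ _ => ?_
  refine (MvPolynomial.totalDegree_smul_le _ _).trans
    ((MvPolynomial.totalDegree_finsetProd _ _).trans ?_)
  exact (Finset.sum_le_card_nsmul _ _ D fun i _ => h _ _).trans_eq (by simp)

theorem prime_natCast_mvPolynomial {σ : Type*} {p : ℕ} (hp : p.Prime) :
    Prime (p : MvPolynomial σ ℤ) := by
  rw [← map_natCast MvPolynomial.C, MvPolynomial.prime_C_iff]
  exact Nat.prime_iff_prime_int.1 hp

theorem exists_prime_not_dvd {σ : Type*} [Finite σ] {T Z : ℕ} {g : MvPolynomial σ ℤ} (hg0 : g ≠ 0)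
    (hdeg : g.totalDegree ≤ T) (hg : BoundedOnBox T Z g) {S : Finset ℕ}
    (hS : ∀ p ∈ S, p.Prime) (hZ : Z < 2 ^ S.card) : ∃ p ∈ S, ¬ (p : MvPolynomial σ ℤ) ∣ g := by
  by_contra! hdvd
  have hprod : Z < ∏ p ∈ S, p :=
    hZ.trans_le (Finset.pow_card_le_prod _ _ _ fun p hp => (hS p hp).two_le)
  refine hg0 (hg.eq_zero_of_forall_dvd_eval hdeg hprod fun x => ?_)
  refine Int.natCast_dvd.2 (Finset.prod_primes_dvd _ (fun p hp => (hS p hp).prime) fun p hp => ?_)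
  exact Int.natCast_dvd.1 (by simpa using map_dvd (MvPolynomial.eval x) (hdvd p hp))

/-! ### Monic polynomials of bounded size -/

theorem abs_le_of_isRoot_of_forall_abs_coeff_le {f : ℤ[X]} (hf : f.Monic) {A : ℕ}
    (hA : ∀ j, |f.coeff j| ≤ A) {y : ℤ} (hy : f.IsRoot y) : |y| ≤ A := by
  have hmonic : (f.map (Int.castRingHom ℝ)).Monic := hf.map _
  have hlt := (hy.map (f := Int.castRingHom ℝ)).norm_lt_cauchyBound hmonic.ne_zero
  have hle : (f.map (Int.castRingHom ℝ)).cauchyBound ≤ A + 1 := by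
    rw [cauchyBound, hmonic.leadingCoeff, nnnorm_one, div_one]
    gcongr
    refine Finset.sup_le fun j _ => NNReal.coe_le_coe.1 ?_
    rw [coe_nnnorm, coeff_map, eq_intCast, Real.norm_eq_abs, ← Int.cast_abs, NNReal.coe_natCast]
    exact_mod_cast hA j
  have := NNReal.coe_lt_coe.2 (hlt.trans_le hle)
  rw [coe_nnnorm, eq_intCast, Real.norm_eq_abs, ← Int.cast_abs, NNReal.coe_add,
    NNReal.coe_natCast, NNReal.coe_one] at this
  exact Int.lt_add_one_iff.1 (by exact_mod_cast this)

theorem abs_coeff_iterate_derivative_le {f : ℤ[X]} {D A k : ℕ} (hdeg : f.natDegree ≤ D)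
    (hA : ∀ j, |f.coeff j| ≤ A) (hk : k ≤ D) (i : ℕ) :
    |(derivative^[k] f).coeff i| ≤ ((D + 1) ^ D * A : ℕ) := by
  rw [coeff_iterate_derivative]
  rcases le_or_gt (i + k) D with hik | hik
  · have hfactorial : (i + k).descFactorial k ≤ (D + 1) ^ D :=
      (Nat.descFactorial_le_pow _ _).trans ((Nat.pow_le_pow_left (by lia) k).trans
        (Nat.pow_le_pow_right D.succ_pos hk))
    rw [nsmul_eq_mul, abs_mul, Nat.abs_cast, Nat.cast_mul]
    exact mul_le_mul (by exact_mod_cast hfactorial) (hA _) (abs_nonneg _) (by positivity)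
  · rw [coeff_eq_zero_of_natDegree_lt (hdeg.trans_lt hik), smul_zero, abs_zero]
    positivity

theorem abs_eval_iterate_derivative_le {f : ℤ[X]} (hf : f.Monic) {D A k : ℕ}
    (hdeg : f.natDegree ≤ D) (hA : ∀ j, |f.coeff j| ≤ A) (hk : k ≤ D) {y : ℤ} (hy : |y| ≤ A) :
    |(derivative^[k] f).eval y| ≤ (((D + 1) * A) ^ (D + 1) : ℕ) := by
  have hA1 : 1 ≤ (A : ℤ) := by simpa [hf.coeff_natDegree] using hA f.natDegree
  have hterm : ∀ i ∈ Finset.range (D + 1), |(derivative^[k] f).coeff i * y ^ i| ≤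
      (((D + 1) ^ D * A * A ^ D : ℕ) : ℤ) := fun i hi => by
    rw [abs_mul, abs_pow, Nat.cast_mul _ (A ^ D), Nat.cast_pow]
    exact mul_le_mul (abs_coeff_iterate_derivative_le hdeg hA hk i)
      ((pow_le_pow_left₀ (abs_nonneg _) hy i).trans
        (pow_le_pow_right₀ hA1 (Finset.mem_range_succ_iff.1 hi))) (by positivity) (by positivity)
  rw [eval_eq_sum_range' (Nat.lt_succ_of_le
    ((natDegree_iterate_derivative f k).trans ((Nat.sub_le _ _).trans hdeg)))]
  refine (Finset.abs_sum_le_sum_abs _ _).trans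
    ((Finset.sum_le_card_nsmul _ _ _ hterm).trans_eq ?_)
  rw [Finset.card_range, nsmul_eq_mul, ← Nat.cast_mul, mul_pow, pow_succ', pow_succ A]
  congr 1
  ring

theorem exists_eval_iterate_derivative_eq_zero_and_ne_zero {S : Type*} [CommRing S] [IsDomain S]
    [CharZero S] {f : S[X]} (hf : f ≠ 0) {q : S} (hq : f.IsRoot q) :
    ∃ j < f.natDegree, (derivative^[j] f).eval q = 0 ∧ (derivative^[j + 1] f).eval q ≠ 0 := by
  have hpos : 0 < f.rootMultiplicity q := (rootMultiplicity_pos hf).2 hq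
  obtain ⟨j, hj⟩ := Nat.exists_eq_add_of_le' hpos
  have hroot (k) (hk : k ≤ j) : (derivative^[k] f).IsRoot q :=
    isRoot_iterate_derivative_of_lt_rootMultiplicity (by lia)
  refine ⟨j, ?_, hroot j le_rfl, fun hzero => ?_⟩
  · classical
    rw [← Nat.succ_le_iff, Nat.succ_eq_add_one, ← hj, ← count_roots]
    exact (Multiset.count_le_card _ _).trans (card_roots' f)
  · refine hj.not_gt ((lt_rootMultiplicity_iff_isRoot_iterate_derivative hf).2
      fun m (hm : m ≤ j + 1) => ?_)
    rcases Nat.le_or_eq_of_le_succ hm with hm | rfl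
    exacts [hroot m hm, hzero]

theorem totalDegree_bind₁_le {σ τ R : Type*} [CommSemiring R] {s : σ → MvPolynomial τ R}
    (hs : ∀ i, (s i).totalDegree ≤ 1) (g : MvPolynomial σ R) :
    (MvPolynomial.bind₁ s g).totalDegree ≤ g.totalDegree := by
  rw [MvPolynomial.bind₁, MvPolynomial.aeval_def, MvPolynomial.eval₂_eq]
  refine MvPolynomial.totalDegree_finsetSum_le fun d hd => ?_
  rw [MvPolynomial.algebraMap_eq]
  refine (MvPolynomial.totalDegree_mul _ _).trans ?_
  rw [MvPolynomial.totalDegree_C, zero_add]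
  refine (MvPolynomial.totalDegree_finsetProd _ _).trans
    ((Finset.sum_le_sum fun i _ => ?_).trans (MvPolynomial.le_totalDegree hd))
  exact (MvPolynomial.totalDegree_pow _ _).trans (mul_le_of_le_one_right' (hs i))

theorem totalDegree_le_of_isRoot {σ R : Type*} [CommRing R] [IsDomain R]
    {G : (MvPolynomial σ R)[X]} (hG : G.Monic) {D : ℕ} (hD : ∀ j, (G.coeff j).totalDegree ≤ D)
    {q : MvPolynomial σ R} (hq : G.IsRoot q) : q.totalDegree ≤ D := by
  by_contra! hlt
  have hq0 : q ≠ 0 := by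
    rintro rfl
    simp at hlt
  have hpow (k : ℕ) : (q ^ k).totalDegree = k * q.totalDegree := by
    induction k with
    | zero => simp
    | succ k ih =>
      rw [pow_succ, MvPolynomial.totalDegree_mul_of_isDomain (pow_ne_zero _ hq0) hq0, ih,
        Nat.succ_mul]
  obtain ⟨d, hd⟩ : ∃ d, G.natDegree = d + 1 := Nat.exists_eq_succ_of_ne_zero fun h0 => by
    rw [IsRoot, hG.natDegree_eq_zero.1 h0, eval_one] at hq
    exact one_ne_zero hq
  have hlead : q ^ (d + 1) = -∑ i ∈ Finset.range (d + 1), G.coeff i * q ^ i := by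
    rw [IsRoot, eval_eq_sum_range, Finset.sum_range_succ, hG.coeff_natDegree, one_mul, hd] at hq
    linear_combination hq
  have hle : (q ^ (d + 1)).totalDegree ≤ D + d * q.totalDegree := by
    rw [hlead, MvPolynomial.totalDegree_neg]
    refine MvPolynomial.totalDegree_finsetSum_le fun i hi => ?_
    refine (MvPolynomial.totalDegree_mul _ _).trans (add_le_add (hD i) ?_)
    rw [hpow]
    exact Nat.mul_le_mul_right _ (Finset.mem_range_succ_iff.1 hi)
  rw [hpow, Nat.succ_mul] at hle
  lia

theorem totalDegree_eval_iterate_derivative_le {σ R : Type*} [CommRing R]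
    {G : (MvPolynomial σ R)[X]} {D : ℕ} (hdeg : G.natDegree ≤ D)
    (hD : ∀ j, (G.coeff j).totalDegree ≤ D) {q : MvPolynomial σ R} (hq : q.totalDegree ≤ D)
    (k : ℕ) : ((derivative^[k] G).eval q).totalDegree ≤ D + D * D := by
  rw [eval_eq_sum_range]
  refine MvPolynomial.totalDegree_finsetSum_le fun i hi => ?_
  have hi : i ≤ D := (Finset.mem_range_succ_iff.1 hi).trans
    ((natDegree_iterate_derivative G k).trans ((Nat.sub_le _ _).trans hdeg))
  refine (MvPolynomial.totalDegree_mul _ _).trans (add_le_add ?_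
    ((MvPolynomial.totalDegree_pow _ _).trans (Nat.mul_le_mul hi hq)))
  rw [coeff_iterate_derivative]
  exact (MvPolynomial.totalDegree_smul_le _ _).trans (hD _)

/-- A monic polynomial in `Y` of degree at most `D` over `ℤ[X]`, whose coefficients have total
degree at most `D` and grow at most like `H * T ^ D` on the boxes `[-T, T] ^ σ`. The growth
condition replaces a bound on the coefficients, being better behaved under substitutions. -/
structure MonicOfSize {σ : Type*} (D H : ℕ) (G : (MvPolynomial σ ℤ)[X]) : Prop where
  monic : G.Monic
  natDegree_le : G.natDegree ≤ D
  totalDegree_coeff_le : ∀ j, (G.coeff j).totalDegree ≤ D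
  boundedOnBox_coeff : ∀ j T, 1 ≤ T → BoundedOnBox T (H * T ^ D) (G.coeff j)

namespace MonicOfSize

variable {σ τ : Type*} {D H : ℕ} {G : (MvPolynomial σ ℤ)[X]}

theorem one_le (hG : MonicOfSize D H G) : 1 ≤ H := by
  have := hG.boundedOnBox_coeff G.natDegree 1 le_rfl 0 (by simp)
  simpa [hG.monic.coeff_natDegree] using this

theorem abs_coeff_map_eval_le (hG : MonicOfSize D H G) {T : ℕ} (hT : 1 ≤ T) {x : σ → ℤ}
    (hx : ∀ i, |x i| ≤ T) (j : ℕ) :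
    |(G.map (MvPolynomial.eval x)).coeff j| ≤ (H * T ^ D : ℕ) := by
  rw [coeff_map]
  exact hG.boundedOnBox_coeff j T hT x hx

theorem totalDegree_root_le (hG : MonicOfSize D H G) {q : MvPolynomial σ ℤ} (hq : G.IsRoot q) :
    q.totalDegree ≤ D :=
  totalDegree_le_of_isRoot hG.monic hG.totalDegree_coeff_le hq

theorem boundedOnBox_root (hG : MonicOfSize D H G) {q : MvPolynomial σ ℤ} (hq : G.IsRoot q)
    {T : ℕ} (hT : 1 ≤ T) : BoundedOnBox T (H * T ^ D) q := fun _ hx =>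
  abs_le_of_isRoot_of_forall_abs_coeff_le (hG.monic.map _) (hG.abs_coeff_map_eval_le hT hx) hq.map

theorem boundedOnBox_eval_iterate_derivative (hG : MonicOfSize D H G) {q : MvPolynomial σ ℤ}
    (hq : G.IsRoot q) {T k : ℕ} (hT : 1 ≤ T) (hk : k ≤ D) :
    BoundedOnBox T (((D + 1) * (H * T ^ D)) ^ (D + 1)) ((derivative^[k] G).eval q) := fun x hx => by
  rw [← eval_map_apply, ← iterate_derivative_map]
  exact abs_eval_iterate_derivative_le (hG.monic.map _)
    (natDegree_map_le.trans hG.natDegree_le) (hG.abs_coeff_map_eval_le hT hx) hk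
    (hG.boundedOnBox_root hq hT x hx)

theorem map_bind₁ (hG : MonicOfSize D H G) {s : σ → MvPolynomial τ ℤ} {B : ℕ} (hB : 1 ≤ B)
    (hdeg : ∀ i, (s i).totalDegree ≤ 1) (hs : ∀ i T, 1 ≤ T → BoundedOnBox T (B * T) (s i)) :
    MonicOfSize D (H * B ^ D) (G.map (MvPolynomial.bind₁ s : _ →+* MvPolynomial τ ℤ)) where
  monic := hG.monic.map _
  natDegree_le := natDegree_map_le.trans hG.natDegree_le
  totalDegree_coeff_le j := by
    rw [coeff_map]
    exact (totalDegree_bind₁_le hdeg _).trans (hG.totalDegree_coeff_le j)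
  boundedOnBox_coeff j T hT x hx := by
    have heval (g : MvPolynomial σ ℤ) : MvPolynomial.eval x (MvPolynomial.bind₁ s g) =
        MvPolynomial.eval (fun i => MvPolynomial.eval x (s i)) g :=
      MvPolynomial.aeval_bind₁ x s g
    rw [coeff_map, RingHom.coe_coe, heval, mul_assoc, ← mul_pow]
    exact hG.boundedOnBox_coeff j _ (Nat.mul_pos hB hT) _ fun i => hs i T hT x hx

end MonicOfSize

/-! ### Points in a residue class -/

theorem factorial_mul_pow_mul_pow_lt_pow_choose_two {L M Y p : ℕ} (hM : 1 ≤ M) (hp : 4 ≤ p)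
    (hL : 16 * L ≤ p ^ 2) (hY : 16 * Y < 4 ^ M) :
    (2 * M).factorial * (L ^ (M * (M - 1)) * Y ^ M) < p ^ (2 * M).choose 2 := by
  obtain ⟨N, rfl⟩ := Nat.exists_eq_add_of_le' hM
  have hfactor : (2 * (N + 1)) ^ 2 * (L ^ N * Y) < p ^ (2 * N + 1) := by
    have hbase : (2 * (N + 1)) ^ 2 * Y < 4 * 16 ^ N := by
      have hN : (N + 1) ^ 2 ≤ 4 ^ (N + 1) := by
        rw [show 4 = 2 ^ 2 by rfl, pow_right_comm]
        exact Nat.pow_le_pow_left Nat.lt_two_pow_self.le 2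
      have hsixteen : 16 * ((2 * (N + 1)) ^ 2 * Y) < 16 * (4 * 16 ^ N) := by
        calc 16 * ((2 * (N + 1)) ^ 2 * Y) = 4 * (N + 1) ^ 2 * (16 * Y) := by ring
          _ ≤ 4 * 4 ^ (N + 1) * (16 * Y) := by gcongr
          _ < 4 * 4 ^ (N + 1) * 4 ^ (N + 1) := by gcongr
          _ = 16 * (4 * 16 ^ N) := by rw [mul_assoc, ← mul_pow]; ring
      exact Nat.lt_of_mul_lt_mul_left hsixteen
    rcases (L ^ N).eq_zero_or_pos with h0 | hpos
    · rw [h0, zero_mul, mul_zero]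
      positivity
    calc (2 * (N + 1)) ^ 2 * (L ^ N * Y) = (2 * (N + 1)) ^ 2 * Y * L ^ N := by ring
      _ < 4 * 16 ^ N * L ^ N := Nat.mul_lt_mul_of_pos_right hbase hpos
      _ = 4 * (16 * L) ^ N := by rw [mul_pow, mul_assoc]
      _ ≤ p * (p ^ 2) ^ N := Nat.mul_le_mul hp (Nat.pow_le_pow_left hL N)
      _ = p ^ (2 * N + 1) := by ring
  calc (2 * (N + 1)).factorial * (L ^ ((N + 1) * (N + 1 - 1)) * Y ^ (N + 1))
      ≤ (2 * (N + 1)) ^ (2 * (N + 1)) * (L ^ ((N + 1) * (N + 1 - 1)) * Y ^ (N + 1)) :=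
        Nat.mul_le_mul_right _ (Nat.factorial_le_pow _)
    _ = ((2 * (N + 1)) ^ 2 * (L ^ N * Y)) ^ (N + 1) := by
        rw [Nat.add_sub_cancel, mul_comm (N + 1) N, pow_mul _ 2, pow_mul L, ← mul_pow, ← mul_pow]
    _ < (p ^ (2 * N + 1)) ^ (N + 1) := Nat.pow_lt_pow_left hfactor N.succ_ne_zero
    _ = p ^ (2 * (N + 1)).choose 2 := by
        rw [← pow_mul, Nat.choose_two_right, mul_assoc, Nat.mul_div_cancel_left _ two_pos, mul_comm]
        rfl

section

variable {σ : Type*} [Finite σ]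

local notation "𝓡" => MvPolynomial σ ℤ

theorem det_lowMonomial_eq_zero {D K L M Y p : ℕ} (hp : p.Prime) (hp4 : 4 ≤ p) (hM : 1 ≤ M)
    (hL : 16 * L ≤ p ^ 2) (hY : 16 * Y < 4 ^ M) (hK : 2 * M * D ≤ K) {f : 𝓡[X][X]} {b₀ y₀ : 𝓡}
    (hu : ¬ (p : 𝓡) ∣ (derivative f).evalEval b₀ y₀) {b : Fin M ⊕ Fin M → ℤ}
    {y : Fin M ⊕ Fin M → 𝓡} (hbL : ∀ i, |b i| ≤ L) (hyD : ∀ i, (y i).totalDegree ≤ D)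
    (hyY : ∀ i, BoundedOnBox K Y (y i)) (hb : ∀ i, (p : 𝓡) ∣ b i - b₀)
    (hy : ∀ i, (p : 𝓡) ∣ y i - y₀) (hf : ∀ i, f.evalEval (b i : 𝓡) (y i) = 0) :
    (Matrix.of fun i j => (lowMonomial 𝓡 M j).evalEval (b i : 𝓡) (y i)).det = 0 := by
  have hdvd := pow_choose_two_dvd_det_evalEval (prime_natCast_mvPolynomial hp) hu
    (lowMonomial 𝓡 M) hb hy hf
  set A : Matrix (Fin M ⊕ Fin M) (Fin M ⊕ Fin M) 𝓡 :=
    Matrix.of fun i j => (lowMonomial 𝓡 M j).evalEval (b i : 𝓡) (y i)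
  have hinl (i k) : A i (.inl k) = (b i : 𝓡) ^ (k : ℕ) := evalEval_lowMonomial_inl k _ _
  have hinr (i k) : A i (.inr k) = (b i : 𝓡) ^ (k : ℕ) * y i := evalEval_lowMonomial_inr k _ _
  have hpow (i) (k : Fin M) : BoundedOnBox K (L ^ (k : ℕ)) ((b i : 𝓡) ^ (k : ℕ)) :=
    (BoundedOnBox.intCast (hbL i)).pow k
  have hpowdeg (i) (k : Fin M) : ((b i : 𝓡) ^ (k : ℕ)).totalDegree = 0 := by
    rw [← Int.cast_pow, totalDegree_intCast]
  have hdeg : A.det.totalDegree ≤ K := by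
    refine (totalDegree_det_le (D := D) fun i => Sum.rec (fun k => ?_) fun k => ?_).trans
      ((Eq.le (by simp [two_mul])).trans hK)
    · exact (hinl i k ▸ hpowdeg i k).trans_le D.zero_le
    · rw [hinr]
      exact (MvPolynomial.totalDegree_mul _ _).trans (by rw [hpowdeg, zero_add]; exact hyD i)
  let c : Fin M ⊕ Fin M → ℕ := Sum.elim (fun k => L ^ (k : ℕ)) fun k => L ^ (k : ℕ) * Y
  have hprod : ∏ j, c j = L ^ (M * (M - 1)) * Y ^ M := by
    simp only [c, Fintype.prod_sum_type, Sum.elim_inl, Sum.elim_inr, Finset.prod_mul_distrib,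
      Finset.prod_const, Finset.card_univ, Fintype.card_fin, Fin.prod_univ_eq_prod_range (L ^ ·) M,
      ← mul_assoc]
    rw [Finset.prod_pow_eq_pow_sum, ← pow_add, ← mul_two, Finset.sum_range_id_mul_two]
  have hbound := BoundedOnBox.det (A := A) (T := K) (c := c) fun i =>
    Sum.rec (fun k => hinl i k ▸ hpow i k) fun k => hinr i k ▸ (hpow i k).mul (hyY i)
  have hcard : Fintype.card (Fin M ⊕ Fin M) = 2 * M := by simp [two_mul]
  rw [hprod, hcard] at hbound
  refine hbound.eq_zero_of_forall_dvd_eval hdeg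
    (factorial_mul_pow_mul_pow_lt_pow_choose_two hM hp4 hL hY) fun x => ?_
  simpa [hcard] using map_dvd (MvPolynomial.eval x) hdvd

theorem card_le_of_forall_dvd_sub {D K L M Y p : ℕ} (hp : p.Prime) (hp4 : 4 ≤ p) (hM : 1 ≤ M)
    (hL : 16 * L ≤ p ^ 2) (hY : 16 * Y < 4 ^ M) (hK : 2 * M * D ≤ K) {F f : 𝓡[X][X]}
    (hF : F.Monic) (hroot : ∀ r, F.eval r ≠ 0) (hcoeff : ∀ j, (F.coeff j).natDegree ≤ D)
    {b₀ y₀ : 𝓡} (hu : ¬ (p : 𝓡) ∣ (derivative f).evalEval b₀ y₀) {T : Finset ℤ} {q : ℤ → 𝓡}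
    (hTL : ∀ b ∈ T, |b| ≤ L) (hqD : ∀ b ∈ T, (q b).totalDegree ≤ D)
    (hqY : ∀ b ∈ T, BoundedOnBox K Y (q b)) (hTb : ∀ b ∈ T, (p : 𝓡) ∣ b - b₀)
    (hTq : ∀ b ∈ T, (p : 𝓡) ∣ q b - y₀) (hf : ∀ b ∈ T, f.evalEval (b : 𝓡) (q b) = 0)
    (hFq : ∀ b ∈ T, F.evalEval (b : 𝓡) (q b) = 0) : T.card ≤ D + F.natDegree * M + M := by
  rw [← Fintype.card_coe]
  refine card_le_of_forall_det_lowMonomial_eq_zero hF hroot hcoeff (b := fun k : T => ((k : ℤ) : 𝓡))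
    (Int.cast_injective.comp Subtype.val_injective) (fun k => hFq k k.2) fun β => ?_
  exact det_lowMonomial_eq_zero hp hp4 hM hL hY hK hu (fun i => hTL _ (β i).2)
    (fun i => hqD _ (β i).2) (fun i => hqY _ (β i).2) (fun i => hTb _ (β i).2)
    (fun i => hTq _ (β i).2) fun i => hf _ (β i).2

end

theorem card_image_mk_le_natDegree {R κ : Type*} [CommRing R] {p b₀ : R} (hp : Prime p)
    [DecidableEq (R ⧸ Ideal.span {p})] {f : R[X][X]} {T : Finset κ} {b q : κ → R}
    (hb : ∀ k ∈ T, p ∣ b k - b₀) (hf : ∀ k ∈ T, f.evalEval (b k) (q k) = 0)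
    (hu : ∀ k ∈ T, ¬ p ∣ (derivative f).evalEval (b k) (q k)) :
    (T.image fun k => Ideal.Quotient.mk (Ideal.span {p}) (q k)).card ≤ f.natDegree := by
  let φ := Ideal.Quotient.mk (Ideal.span {p})
  have hprime : (Ideal.span {p}).IsPrime := (Ideal.span_singleton_prime hp.ne_zero).2 hp
  have hφ (z) : φ z = 0 ↔ p ∣ z := by
    rw [Ideal.Quotient.eq_zero_iff_mem, Ideal.mem_span_singleton]
  let ψ := φ.comp (evalRingHom b₀)
  have hspec (g : R[X][X]) (k) (hk : k ∈ T) :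
      φ (g.evalEval (b k) (q k)) = (g.map ψ).eval (φ (q k)) := by
    rw [← map_map, eval_map_apply, ← evalEval_eq_eval_map, ← sub_eq_zero, ← map_sub, hφ]
    exact dvd_evalEval_sub_evalEval g (hb k hk) (by rw [sub_self]; exact dvd_zero p)
  rcases T.eq_empty_or_nonempty with rfl | ⟨k₁, hk₁⟩
  · simp
  have hne : f.map ψ ≠ 0 := fun h0 => hu k₁ hk₁ <| by
    rw [← hφ, hspec _ _ hk₁, ← derivative_map, h0, derivative_zero, eval_zero]
  refine (card_le_natDegree_of_forall_eval_eq_zero hne fun z hz => ?_).trans natDegree_map_le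
  obtain ⟨k, hk, rfl⟩ := Finset.mem_image.1 hz
  exact (hspec f k hk).symm.trans (by rw [hf k hk, map_zero])

theorem card_le_mul_of_forall_congruent_card_le {R : Type*} [CommRing R] {p : ℕ} [NeZero p]
    (hp : Prime (p : R)) {f : R[X][X]} {T : Finset ℤ} {q : ℤ → R} {N : ℕ}
    (hf : ∀ b ∈ T, f.evalEval (b : R) (q b) = 0)
    (hu : ∀ b ∈ T, ¬ (p : R) ∣ (derivative f).evalEval (b : R) (q b))
    (hN : ∀ T' ⊆ T, ∀ b₀ ∈ T', (∀ b ∈ T', (p : R) ∣ b - b₀) → (∀ b ∈ T', (p : R) ∣ q b - q b₀) →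
      T'.card ≤ N) : T.card ≤ p * (f.natDegree * N) := by
  classical
  have hclass : ∀ r ∈ (Finset.univ : Finset (ZMod p)),
      (T.filter fun b : ℤ => (b : ZMod p) = r).card ≤ N * f.natDegree := fun r _ => by
    set U := T.filter fun b : ℤ => (b : ZMod p) = r
    have hUT : U ⊆ T := Finset.filter_subset _ _
    have hU : ∀ b ∈ U, ∀ b' ∈ U, (p : R) ∣ b - b' := fun b hb b' hb' => by
      have : (p : ℤ) ∣ b - b' := by
        rw [← ZMod.intCast_zmod_eq_zero_iff_dvd, Int.cast_sub, (Finset.mem_filter.1 hb).2,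
          (Finset.mem_filter.1 hb').2, sub_self]
      simpa using map_dvd (Int.castRingHom R) this
    rcases U.eq_empty_or_nonempty with h | ⟨b₁, hb₁⟩
    · simp [h]
    refine (Finset.card_le_mul_card_image
      (f := fun b => Ideal.Quotient.mk (Ideal.span {(p : R)}) (q b)) U N fun z hz => ?_).trans
      (Nat.mul_le_mul_left N (card_image_mk_le_natDegree hp (fun b hb => hU b hb b₁ hb₁)
        (fun b hb => hf b (hUT hb)) fun b hb => hu b (hUT hb)))
    obtain ⟨b₀, hb₀, rfl⟩ := Finset.mem_image.1 hz
    refine hN _ ((Finset.filter_subset _ _).trans hUT) b₀ (Finset.mem_filter.2 ⟨hb₀, rfl⟩)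
      (fun b hb => hU b (Finset.mem_filter.1 hb).1 b₀ hb₀) fun b hb => ?_
    rw [← Ideal.mem_span_singleton, ← Ideal.Quotient.mk_eq_mk_iff_sub_mem]
    exact (Finset.mem_filter.1 hb).2
  have := Finset.card_le_mul_card_image_of_maps_to (s := T) (f := fun b : ℤ => (b : ZMod p))
    (fun b _ => Finset.mem_univ _) _ hclass
  rw [Finset.card_univ, ZMod.card] at this
  linarith

/- The size conditions on `p` and `M` make the interpolation determinants of the points in one
residue class modulo `p` smaller than the power of `p` dividing them. -/
theorem card_le_of_forall_not_dvd_derivative {σ : Type*} [Finite σ] {D K L M Y p : ℕ}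
    (hp : p.Prime) (hp4 : 4 ≤ p) (hM : 1 ≤ M) (hL : 16 * L ≤ p ^ 2) (hY : 16 * Y < 4 ^ M)
    (hK : 2 * M * D ≤ K) {F f : (MvPolynomial σ ℤ)[X][X]} (hF : F.Monic)
    (hroot : ∀ r, F.eval r ≠ 0) (hcoeff : ∀ j, (F.coeff j).natDegree ≤ D) {T : Finset ℤ}
    {q : ℤ → MvPolynomial σ ℤ} (hTL : ∀ b ∈ T, |b| ≤ L) (hqD : ∀ b ∈ T, (q b).totalDegree ≤ D)
    (hqY : ∀ b ∈ T, BoundedOnBox K Y (q b))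
    (hFq : ∀ b ∈ T, F.evalEval (b : MvPolynomial σ ℤ) (q b) = 0)
    (hf : ∀ b ∈ T, f.evalEval (b : MvPolynomial σ ℤ) (q b) = 0)
    (hu : ∀ b ∈ T, ¬ (p : MvPolynomial σ ℤ) ∣
      (derivative f).evalEval (b : MvPolynomial σ ℤ) (q b)) :
    T.card ≤ p * (f.natDegree * (D + F.natDegree * M + M)) := by
  have : NeZero p := ⟨hp.ne_zero⟩
  refine card_le_mul_of_forall_congruent_card_le (prime_natCast_mvPolynomial hp) hf hu
    fun T' hT' b₀ hb₀ hTb hTq => ?_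
  exact card_le_of_forall_dvd_sub hp hp4 hM hL hY hK hF hroot hcoeff (hu b₀ (hT' hb₀))
    (fun b hb => hTL b (hT' hb)) (fun b hb => hqD b (hT' hb)) (fun b hb => hqY b (hT' hb)) hTb hTq
    (fun b hb => hf b (hT' hb)) fun b hb => hFq b (hT' hb)

/-! ### Specialization of variables -/

/-- The substitution of the constant `b` for the first variable; the remaining ones are renumbered
from `0`. -/
def specializeHead {n : ℕ} (b : ℤ) : MvPolynomial (Fin (n + 1)) ℤ →+* MvPolynomial (Fin n) ℤ :=
  (MvPolynomial.bind₁ (Fin.cons (b : MvPolynomial (Fin n) ℤ) MvPolynomial.X) :)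

/-- The substitution of the constants `a` for all variables but the first. -/
def specializeTail {n : ℕ} (a : Fin n → ℤ) :
    MvPolynomial (Fin (n + 1)) ℤ →+* MvPolynomial (Fin 1) ℤ :=
  (MvPolynomial.bind₁ (Fin.cons (MvPolynomial.X 0) fun i => (a i : MvPolynomial (Fin 1) ℤ)) :)

/-- A polynomial in `Y` over `ℤ[X₀, …, Xₙ]`, seen as a polynomial in `Y` over `ℤ[X₁, …, Xₙ][X₀]`. -/
def splitHead {n : ℕ} (G : (MvPolynomial (Fin (n + 1)) ℤ)[X]) : (MvPolynomial (Fin n) ℤ)[X][X] :=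
  G.map (MvPolynomial.finSuccEquiv ℤ n : _ →+* (MvPolynomial (Fin n) ℤ)[X])

section Specialization

variable {n : ℕ} {G : (MvPolynomial (Fin (n + 1)) ℤ)[X]}

theorem eval_comp_specializeHead (b : ℤ) (a : Fin n → ℤ) :
    (MvPolynomial.eval a).comp (specializeHead b) = MvPolynomial.eval (Fin.cons b a) :=
  MvPolynomial.ringHom_ext (by simp [specializeHead])
    (Fin.cases (by simp [specializeHead]) (by simp [specializeHead]))

theorem specializeHead_comp_specializeTail (b : ℤ) (a : Fin n → ℤ) :
    (specializeHead b).comp (specializeTail a) =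
      MvPolynomial.C.comp (MvPolynomial.eval (Fin.cons b a)) :=
  MvPolynomial.ringHom_ext (by simp [specializeHead, specializeTail])
    (Fin.cases (by simp [specializeHead, specializeTail])
      (by simp [specializeHead, specializeTail]))

theorem evalRingHom_comp_finSuccEquiv (b : ℤ) :
    (evalRingHom (b : MvPolynomial (Fin n) ℤ)).comp
      (MvPolynomial.finSuccEquiv ℤ n : _ →+* (MvPolynomial (Fin n) ℤ)[X]) = specializeHead b :=
  MvPolynomial.ringHom_ext (by simp [specializeHead])
    (Fin.cases (by simp [specializeHead, MvPolynomial.finSuccEquiv_X_zero])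
      (by simp [specializeHead, MvPolynomial.finSuccEquiv_X_succ]))

theorem evalEval_iterate_derivative_splitHead (b : ℤ) (q : MvPolynomial (Fin n) ℤ) (j : ℕ) :
    (derivative^[j] (splitHead G)).evalEval (b : MvPolynomial (Fin n) ℤ) q =
      (derivative^[j] (G.map (specializeHead b))).eval q := by
  rw [evalEval_eq_eval_map, ← iterate_derivative_map, splitHead, map_map,
    evalRingHom_comp_finSuccEquiv]

theorem evalEval_splitHead (b : ℤ) (q : MvPolynomial (Fin n) ℤ) :
    (splitHead G).evalEval (b : MvPolynomial (Fin n) ℤ) q = (G.map (specializeHead b)).eval q :=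
  evalEval_iterate_derivative_splitHead b q 0

theorem eval_splitHead_ne_zero (hroot : ∀ r, ¬ G.IsRoot r) (r : (MvPolynomial (Fin n) ℤ)[X]) :
    (splitHead G).eval r ≠ 0 := by
  intro hr
  obtain ⟨g, rfl⟩ := (MvPolynomial.finSuccEquiv ℤ n).surjective r
  refine hroot g ((MvPolynomial.finSuccEquiv ℤ n).injective ?_)
  rw [map_zero, ← hr]
  exact (eval_map_apply (p := G)
    (MvPolynomial.finSuccEquiv ℤ n : _ →+* (MvPolynomial (Fin n) ℤ)[X]) g).symm

theorem natDegree_coeff_splitHead_le (j : ℕ) :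
    ((splitHead G).coeff j).natDegree ≤ (G.coeff j).totalDegree := by
  rw [splitHead, coeff_map]
  exact (MvPolynomial.natDegree_finSuccEquiv _).trans_le (MvPolynomial.degreeOf_le_totalDegree _ _)

namespace MonicOfSize

variable {D H L : ℕ}

theorem map_specializeHead (hG : MonicOfSize D H G) (hL : 1 ≤ L) {b : ℤ} (hb : |b| ≤ L) :
    MonicOfSize D (H * L ^ D) (G.map (specializeHead b)) := by
  refine hG.map_bind₁ hL (Fin.cases ?_ fun i => ?_) (Fin.cases (fun T hT => ?_) fun i T _ => ?_)
  · exact (totalDegree_intCast b).trans_le zero_le_one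
  · rw [Fin.cons_succ, MvPolynomial.totalDegree_X]
  · rw [Fin.cons_zero]
    exact (BoundedOnBox.intCast hb).mono (Nat.le_mul_of_pos_right L hT)
  · rw [Fin.cons_succ]
    exact (BoundedOnBox.X i).mono (Nat.le_mul_of_pos_left T hL)

theorem map_specializeTail (hG : MonicOfSize D H G) (hL : 1 ≤ L) {a : Fin n → ℤ}
    (ha : ∀ i, |a i| ≤ L) : MonicOfSize D (H * L ^ D) (G.map (specializeTail a)) := by
  refine hG.map_bind₁ hL (Fin.cases ?_ fun i => ?_) (Fin.cases (fun T _ => ?_) fun i T hT => ?_)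
  · rw [Fin.cons_zero, MvPolynomial.totalDegree_X]
  · exact (totalDegree_intCast (a i)).trans_le zero_le_one
  · rw [Fin.cons_zero]
    exact (BoundedOnBox.X 0).mono (Nat.le_mul_of_pos_left T hL)
  · rw [Fin.cons_succ]
    exact (BoundedOnBox.intCast (ha i)).mono (Nat.le_mul_of_pos_right L hT)

end MonicOfSize

end Specialization

/-! ### Curves -/

open Classical in
/-- The integers `b` with `|b| ≤ L` for which `G` acquires a root in `Y` under `X₀ = b`. -/
def headRoots {n : ℕ} (G : (MvPolynomial (Fin (n + 1)) ℤ)[X]) (L : ℕ) : Finset ℤ :=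
  (Finset.Icc (-(L : ℤ)) L).filter fun b => ∃ q, (G.map (specializeHead b)).IsRoot q

theorem mem_headRoots {n L : ℕ} {G : (MvPolynomial (Fin (n + 1)) ℤ)[X]} {b : ℤ} :
    b ∈ headRoots G L ↔ |b| ≤ L ∧ ∃ q, (G.map (specializeHead b)).IsRoot q := by
  simp only [headRoots, Finset.mem_filter, Finset.mem_Icc, abs_le]

namespace MonicOfSize

theorem exists_eval_iterate_derivative_eq_zero_and_not_dvd {σ : Type*} [Finite σ] {D H K : ℕ}
    {G : (MvPolynomial σ ℤ)[X]} (hG : MonicOfSize D H G) {q : MvPolynomial σ ℤ} (hq : G.IsRoot q)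
    (hK1 : 1 ≤ K) (hK : D + D * D ≤ K) {S : Finset ℕ} (hS : ∀ p ∈ S, p.Prime)
    (hcard : ((D + 1) * (H * K ^ D)) ^ (D + 1) < 2 ^ S.card) :
    ∃ p ∈ S, ∃ j < D, (derivative^[j] G).eval q = 0 ∧
      ¬ (p : MvPolynomial σ ℤ) ∣ (derivative^[j + 1] G).eval q := by
  obtain ⟨j, hj, hj0, hj1⟩ :=
    exists_eval_iterate_derivative_eq_zero_and_ne_zero hG.monic.ne_zero hq
  have hjD : j < D := hj.trans_le hG.natDegree_le
  obtain ⟨p, hp, hdvd⟩ := exists_prime_not_dvd hj1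
    ((totalDegree_eval_iterate_derivative_le hG.natDegree_le hG.totalDegree_coeff_le
      (hG.totalDegree_root_le hq) (j + 1)).trans hK)
    (hG.boundedOnBox_eval_iterate_derivative hq hK1 hjD) hS hcard
  exact ⟨p, hp, j, hjD, hj0, hdvd⟩

variable {n D H L M : ℕ} {G : (MvPolynomial (Fin (n + 1)) ℤ)[X]}

theorem card_le_of_forall_not_dvd_derivative (hG : MonicOfSize D H G) (hroot : ∀ r, ¬ G.IsRoot r)
    (hL : 1 ≤ L) (hM : 1 ≤ M) {K p : ℕ} (hK1 : 1 ≤ K) (hK : 2 * M * D ≤ K)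
    (hKM : 16 * (H * L ^ D * K ^ D) < 4 ^ M) (hp : p.Prime) (hpL : 4 * (L.sqrt + 1) ≤ p) {j : ℕ}
    {T : Finset ℤ} {q : ℤ → MvPolynomial (Fin n) ℤ} (hT : ∀ b ∈ T, |b| ≤ L)
    (hq : ∀ b ∈ T, (G.map (specializeHead b)).IsRoot (q b))
    (hj : ∀ b ∈ T, (derivative^[j] (G.map (specializeHead b))).eval (q b) = 0)
    (hj' : ∀ b ∈ T, ¬ (p : MvPolynomial (Fin n) ℤ) ∣
      (derivative^[j + 1] (G.map (specializeHead b))).eval (q b)) :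
    T.card ≤ p * (D * (D + D * M + M)) := by
  have hGb (b) (hb : b ∈ T) := hG.map_specializeHead hL (hT b hb)
  have hdeg : (splitHead G).natDegree ≤ D := natDegree_map_le.trans hG.natDegree_le
  have hdegj : (derivative^[j] (splitHead G)).natDegree ≤ D :=
    (natDegree_iterate_derivative _ _).trans ((Nat.sub_le _ _).trans hdeg)
  have hp16 : 16 * L ≤ p ^ 2 := by
    have := Nat.pow_le_pow_left hpL 2
    have := Nat.sqrt_lt.1 L.sqrt.lt_succ_self
    lia
  refine (_root_.card_le_of_forall_not_dvd_derivative (F := splitHead G)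
    (f := derivative^[j] (splitHead G)) hp (by lia) hM hp16 hKM hK (hG.monic.map _)
    (eval_splitHead_ne_zero hroot)
    (fun i => (natDegree_coeff_splitHead_le i).trans (hG.totalDegree_coeff_le i)) hT
    (fun b hb => (hGb b hb).totalDegree_root_le (hq b hb))
    (fun b hb => (hGb b hb).boundedOnBox_root (hq b hb) hK1)
    (fun b hb => (evalEval_splitHead b (q b)).trans (hq b hb))
    (fun b hb => (evalEval_iterate_derivative_splitHead b (q b) j).trans (hj b hb))
    fun b hb => ?_).trans (by gcongr)
  rw [← Function.iterate_succ_apply' derivative, evalEval_iterate_derivative_splitHead]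
  exact hj' b hb

theorem card_headRoots_le_of_primes (hG : MonicOfSize D H G) (hroot : ∀ r, ¬ G.IsRoot r)
    (hL : 1 ≤ L) (hM : 1 ≤ M) {K P : ℕ} (hK : K = 2 * (D + 1) ^ 2 * M)
    (hKM : 16 * (H * L ^ D * K ^ D) < 4 ^ M) {S : Finset ℕ}
    (hS : ∀ p ∈ S, p.Prime ∧ 4 * (L.sqrt + 1) ≤ p ∧ p ≤ P)
    (hcard : ((D + 1) * (H * L ^ D * K ^ D)) ^ (D + 1) < 2 ^ S.card) :
    (headRoots G L).card ≤ S.card * D * (P * (D * (D + D * M + M))) := by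
  classical
  have hK1 : 1 ≤ K := hK ▸ Nat.mul_pos (by positivity) hM
  have hKD : D + D * D ≤ K := hK ▸ by nlinarith
  have hKMD : 2 * M * D ≤ K := hK ▸ by nlinarith [Nat.zero_le (M * D), Nat.zero_le (M * D * D)]
  have hex : ∀ b : ℤ, ∃ q, b ∈ headRoots G L → (G.map (specializeHead b)).IsRoot q := fun b => by
    by_cases hb : b ∈ headRoots G L
    exacts [(mem_headRoots.1 hb).2.imp fun _ hq _ => hq, ⟨0, fun h => absurd h hb⟩]
  choose q hq using hex
  let Φ (c : ℕ × ℕ) : Finset ℤ := (headRoots G L).filter fun b =>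
    (derivative^[c.2] (G.map (specializeHead b))).eval (q b) = 0 ∧
      ¬ (c.1 : MvPolynomial (Fin n) ℤ) ∣
        (derivative^[c.2 + 1] (G.map (specializeHead b))).eval (q b)
  have hcover : headRoots G L ⊆ (S ×ˢ Finset.range D).biUnion Φ := fun b hb => by
    obtain ⟨p, hp, j, hj, h⟩ := (hG.map_specializeHead hL
      (mem_headRoots.1 hb).1).exists_eval_iterate_derivative_eq_zero_and_not_dvd (hq b hb) hK1 hKD
      (fun p hp => (hS p hp).1) hcard
    exact Finset.mem_biUnion.2 ⟨(p, j), Finset.mk_mem_product hp (Finset.mem_range.2 hj),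
      Finset.mem_filter.2 ⟨hb, h⟩⟩
  refine (Finset.card_le_card hcover).trans ((Finset.card_biUnion_le_card_mul _ _ _
    fun c hc => ?_).trans_eq (by rw [Finset.card_product, Finset.card_range]))
  obtain ⟨hp, hpL, hpP⟩ := hS c.1 (Finset.mem_product.1 hc).1
  have hmem {b} (hb : b ∈ Φ c) := Finset.mem_filter.1 hb
  exact (hG.card_le_of_forall_not_dvd_derivative hroot hL hM hK1 hKMD hKM hp hpL
    (fun b hb => (mem_headRoots.1 (hmem hb).1).1) (fun b hb => hq b (hmem hb).1)
    (fun b hb => (hmem hb).2.1) fun b hb => (hmem hb).2.2).trans (Nat.mul_le_mul_right _ hpP)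

end MonicOfSize

theorem exists_forall_mul_le_two_pow_mul (D : ℕ) : ∃ c ≥ 1, ∀ H L ℓ, 1 ≤ H → 1 ≤ L → 1 ≤ ℓ →
    H * L < 2 ^ ℓ → 16 * ((D + 1) * (H * L ^ D * (2 * (D + 1) ^ 2 * (c * ℓ)) ^ D)) ≤
      2 ^ (c * ℓ) := by
  obtain ⟨c, hc, hgrow⟩ := exists_forall_mul_pow_mul_two_pow_le
    (16 * (D + 1) * (2 * (D + 1) ^ 2) ^ D) D (D + 1)
  refine ⟨c, hc, fun H L ℓ hH hL hℓ hHL => (hgrow ℓ hℓ).trans' ?_⟩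
  have hHLD : H * L ^ D ≤ 2 ^ ((D + 1) * ℓ) :=
    calc H * L ^ D ≤ H ^ (D + 1) * L ^ (D + 1) := by
          gcongr
          exacts [le_self_pow₀ hH D.succ_ne_zero, D.le_succ]
      _ = (H * L) ^ (D + 1) := (mul_pow _ _ _).symm
      _ ≤ (2 ^ ℓ) ^ (D + 1) := by gcongr
      _ = 2 ^ ((D + 1) * ℓ) := by rw [← pow_mul, mul_comm]
  calc 16 * ((D + 1) * (H * L ^ D * (2 * (D + 1) ^ 2 * (c * ℓ)) ^ D))
      = 16 * (D + 1) * (2 * (D + 1) ^ 2) ^ D * (c * ℓ) ^ D * (H * L ^ D) := by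
        rw [mul_pow _ (c * ℓ)]
        ring
    _ ≤ _ := by gcongr

theorem exists_forall_exists_finset_primes_card_eq (t : ℕ) : ∃ c, ∀ s ℓ, 1 ≤ ℓ → s < 2 ^ ℓ →
    ∃ S : Finset ℕ, S.card = t * ℓ ∧
      ∀ p ∈ S, p.Prime ∧ 4 * (s + 1) ≤ p ∧ p ≤ c * ℓ ^ 2 * (s + 1) := by
  obtain ⟨c, hc, hgrow⟩ := exists_forall_mul_pow_mul_two_pow_le (6 + t) 1 1
  refine ⟨c * (5 + t), fun s ℓ hℓ hs => ?_⟩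
  have hℓ2 : ℓ < 2 ^ ℓ := ℓ.lt_two_pow_self
  have hsize : 4 * (s + 1) + t * ℓ + 1 ≤ (5 + t) * 2 ^ ℓ := by nlinarith
  have hsize' : 4 * (s + 1) + t * ℓ + 1 ≤ (5 + t) * (ℓ * (s + 1)) := by
    nlinarith [Nat.zero_le (t * (ℓ * s)), Nat.mul_le_mul_right (s + 1) hℓ]
  have hv : 1 ≤ c * ℓ := Nat.mul_pos hc hℓ
  obtain ⟨S, hcard, hS⟩ := exists_finset_primes_card_eq (P := 4 * (s + 1)) (t := t * ℓ) hv <|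
    calc c * ℓ * (4 * (s + 1) + t * ℓ + 1) ≤ c * ℓ * ((5 + t) * 2 ^ ℓ) := by gcongr
      _ < c * ℓ * ((6 + t) * 2 ^ ℓ) := by gcongr; norm_num
      _ = (6 + t) * (c * ℓ) ^ 1 * 2 ^ (1 * ℓ) := by ring
      _ ≤ 2 ^ (c * ℓ) := hgrow ℓ hℓ
  refine ⟨S, hcard, fun p hp => ⟨(hS p hp).1, (hS p hp).2.1, (hS p hp).2.2.trans ?_⟩⟩
  calc c * ℓ * (4 * (s + 1) + t * ℓ + 1) ≤ c * ℓ * ((5 + t) * (ℓ * (s + 1))) := by gcongr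
    _ = c * (5 + t) * ℓ ^ 2 * (s + 1) := by ring

theorem MonicOfSize.exists_card_headRoots_le (D : ℕ) :
    ∃ C : ℕ, ∀ {n H L ℓ : ℕ} {G : (MvPolynomial (Fin (n + 1)) ℤ)[X]}, MonicOfSize D H G →
      (∀ r, ¬ G.IsRoot r) → 1 ≤ L → H * L < 2 ^ ℓ →
      (headRoots G L).card ≤ C * ℓ ^ 4 * (L.sqrt + 1) := by
  obtain ⟨c, hc, hsmall⟩ := exists_forall_mul_le_two_pow_mul D
  obtain ⟨c', hprimes⟩ := exists_forall_exists_finset_primes_card_eq (c * (D + 1))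
  refine ⟨c * (D + 1) * D * (c' * (D * (D + D * c + c))), fun {n H L ℓ G} hG hroot hL hHL => ?_⟩
  have hH := hG.one_le
  have hℓ : 1 ≤ ℓ := by
    by_contra! h
    rw [Nat.lt_one_iff.1 h, pow_zero] at hHL
    exact hHL.not_ge (Nat.mul_pos hH hL)
  have hM : 1 ≤ c * ℓ := Nat.mul_pos hc hℓ
  specialize hsmall H L ℓ hH hL hℓ hHL
  set A := H * L ^ D * (2 * (D + 1) ^ 2 * (c * ℓ)) ^ D
  have hA4 : 16 * A < 4 ^ (c * ℓ) :=
    calc 16 * A ≤ 16 * ((D + 1) * A) := by gcongr; exact Nat.le_mul_of_pos_left A D.succ_pos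
      _ ≤ 2 ^ (c * ℓ) := hsmall
      _ < 4 ^ (c * ℓ) := Nat.pow_lt_pow_left (by norm_num) (by lia)
  obtain ⟨S, hcard, hS⟩ := hprimes L.sqrt ℓ hℓ
    ((L.sqrt_le_self.trans (Nat.le_mul_of_pos_left L hH)).trans_lt hHL)
  have hS2 : ((D + 1) * A) ^ (D + 1) < 2 ^ S.card := by
    rw [hcard, mul_right_comm, pow_mul]
    exact Nat.pow_lt_pow_left (by nlinarith [Nat.two_pow_pos (c * ℓ)]) D.succ_ne_zero
  calc (headRoots G L).card
      ≤ S.card * D * (c' * ℓ ^ 2 * (L.sqrt + 1) * (D * (D + D * (c * ℓ) + c * ℓ))) :=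
        hG.card_headRoots_le_of_primes hroot hL hM rfl hA4 hS hS2
    _ ≤ S.card * D * (c' * ℓ ^ 2 * (L.sqrt + 1) * (D * (D * ℓ + D * (c * ℓ) + c * ℓ))) := by
        gcongr
        exact Nat.le_mul_of_pos_right D hℓ
    _ = _ := by
        rw [hcard]
        ring

/-! ### Integer points in several variables -/

theorem exists_forall_exists_sqrt_lt (C : ℕ) : ∃ c, ∀ ℓ ≥ 1, ∃ L ≥ 1,
    2 ^ ℓ * L < 2 ^ (c * ℓ) ∧ C * (c * ℓ) ^ 4 * (L.sqrt + 1) < L + 1 := by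
  obtain ⟨c, hc, hgrow⟩ := exists_forall_mul_pow_mul_two_pow_le ((2 * C + 1) ^ 2 + 1) 8 1
  refine ⟨c, fun ℓ hℓ => ?_⟩
  have hu : 1 ≤ c * ℓ := Nat.mul_pos hc hℓ
  set u := c * ℓ
  set k := 2 * (C * u ^ 4) + 1 with hk
  have hku : k ≤ (2 * C + 1) * u ^ 4 := by nlinarith [Nat.one_le_pow 4 u hu]
  refine ⟨k * k, Nat.mul_pos (by lia) (by lia), ?_, by rw [Nat.sqrt_eq]; nlinarith⟩
  calc 2 ^ ℓ * (k * k) ≤ 2 ^ ℓ * ((2 * C + 1) * u ^ 4 * ((2 * C + 1) * u ^ 4)) := by gcongr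
    _ = (2 * C + 1) ^ 2 * (u ^ 8 * 2 ^ ℓ) := by ring
    _ < ((2 * C + 1) ^ 2 + 1) * (u ^ 8 * 2 ^ ℓ) := by gcongr; exact Nat.lt_succ_self _
    _ = ((2 * C + 1) ^ 2 + 1) * u ^ 8 * 2 ^ (1 * ℓ) := by rw [one_mul, mul_assoc]
    _ ≤ 2 ^ u := hgrow ℓ hℓ

theorem MonicOfSize.exists_specializeHead_forall_not_isRoot (D : ℕ) :
    ∃ c, ∀ {n H ℓ : ℕ} {G : (MvPolynomial (Fin (n + 1)) ℤ)[X]}, MonicOfSize D H G →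
      (∀ r, ¬ G.IsRoot r) → 1 ≤ ℓ → H ≤ 2 ^ ℓ →
      ∃ b : ℤ, |b| ≤ (2 ^ (c * ℓ) : ℕ) ∧ ∀ q, ¬ (G.map (specializeHead b)).IsRoot q := by
  obtain ⟨C, hC⟩ := exists_card_headRoots_le D
  obtain ⟨c, hc⟩ := exists_forall_exists_sqrt_lt C
  refine ⟨c, fun {n H ℓ G} hG hroot hℓ hH => ?_⟩
  obtain ⟨L, hL, hLc, hCL⟩ := hc ℓ hℓ
  by_contra! hcon
  have hsub : Finset.Icc 0 (L : ℤ) ⊆ headRoots G L := fun b hb => by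
    have hbL : |b| ≤ L := (abs_of_nonneg (Finset.mem_Icc.1 hb).1).trans_le (Finset.mem_Icc.1 hb).2
    refine mem_headRoots.2 ⟨hbL, hcon b (hbL.trans ?_)⟩
    exact_mod_cast (Nat.le_mul_of_pos_left L (by positivity)).trans hLc.le
  have hcard := (Finset.card_le_card hsub).trans
    (hC hG hroot hL ((Nat.mul_le_mul_right L hH).trans_lt hLc))
  rw [Int.card_Icc] at hcard
  lia

open Classical in
/-- The integer points `x` of `[-L, L] ^ n` for which `G(Y, x)` has an integer root. -/
def solvableBox {n : ℕ} (G : (MvPolynomial (Fin n) ℤ)[X]) (L : ℕ) : Finset (Fin n → ℤ) :=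
  (Fintype.piFinset fun _ => Finset.Icc (-(L : ℤ)) L).filter fun x =>
    ∃ y, (G.map (MvPolynomial.eval x)).IsRoot y

section SolvableBox

variable {n D H L ℓ : ℕ}

theorem mem_solvableBox {G : (MvPolynomial (Fin n) ℤ)[X]} {x : Fin n → ℤ} :
    x ∈ solvableBox G L ↔ (∀ i, |x i| ≤ L) ∧ ∃ y, (G.map (MvPolynomial.eval x)).IsRoot y := by
  simp only [solvableBox, Finset.mem_filter, Fintype.mem_piFinset, Finset.mem_Icc, abs_le]

theorem card_headRoots_le (G : (MvPolynomial (Fin (n + 1)) ℤ)[X]) :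
    (headRoots G L).card ≤ 2 * L + 1 :=
  (Finset.card_le_card fun _ hb => Finset.mem_Icc.2 (abs_le.1 (mem_headRoots.1 hb).1)).trans_eq
    (by rw [Int.card_Icc]; lia)

theorem solvableBox_eq_empty {G : (MvPolynomial (Fin 0) ℤ)[X]} (hroot : ∀ r, ¬ G.IsRoot r) :
    solvableBox G L = ∅ := by
  refine Finset.eq_empty_of_forall_notMem fun x hx => ?_
  obtain ⟨-, y, hy⟩ := mem_solvableBox.1 hx
  have hC : (MvPolynomial.C : ℤ →+* MvPolynomial (Fin 0) ℤ).comp (MvPolynomial.eval x) =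
      RingHom.id _ := MvPolynomial.ringHom_ext (by simp) fun i => i.elim0
  have := hy.map (f := (MvPolynomial.C : ℤ →+* MvPolynomial (Fin 0) ℤ))
  rw [map_map, hC, map_id] at this
  exact hroot _ this

variable {G : (MvPolynomial (Fin (n + 1)) ℤ)[X]}

theorem mem_solvableBox_map_specializeHead {a : Fin n → ℤ} (ha : ∀ i, |a i| ≤ L)
    {r : MvPolynomial (Fin 1) ℤ} (hr : (G.map (specializeTail a)).IsRoot r) (b : ℤ) :
    a ∈ solvableBox (G.map (specializeHead b)) L := by
  have hroot := (hr.map (f := specializeHead b)).map (f := MvPolynomial.eval 0)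
  rw [map_map, map_map, RingHom.comp_assoc, specializeHead_comp_specializeTail,
    ← RingHom.comp_assoc,
    show (MvPolynomial.eval 0).comp MvPolynomial.C = RingHom.id ℤ from RingHom.ext (by simp),
    RingHom.id_comp, ← eval_comp_specializeHead, ← map_map] at hroot
  exact mem_solvableBox.2 ⟨ha, _, hroot⟩

theorem head_mem_headRoots_of_mem_solvableBox {x : Fin (n + 1) → ℤ} (hx : x ∈ solvableBox G L) :
    x 0 ∈ headRoots (G.map (specializeTail (Fin.tail x))) L := by
  obtain ⟨hxL, y, hy⟩ := mem_solvableBox.1 hx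
  refine mem_headRoots.2 ⟨hxL 0, MvPolynomial.C y, ?_⟩
  rw [map_map, specializeHead_comp_specializeTail, Fin.cons_self_tail, ← map_map]
  exact hy.map

theorem card_filter_tail_eq_le_card_headRoots (a : Fin n → ℤ) :
    ((solvableBox G L).filter fun x => Fin.tail x = a).card ≤
      (headRoots (G.map (specializeTail a)) L).card := by
  refine Finset.card_le_card_of_injOn (· 0) (fun x hx => ?_) fun x hx y hy hxy => ?_
  · obtain ⟨hmem, rfl⟩ := Finset.mem_filter.1 (Finset.mem_coe.1 hx)
    exact head_mem_headRoots_of_mem_solvableBox hmem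
  · have hhead : x 0 = y 0 := hxy
    rw [← Fin.cons_self_tail x, ← Fin.cons_self_tail y, hhead,
      (Finset.mem_filter.1 (Finset.mem_coe.1 hx)).2, (Finset.mem_filter.1 (Finset.mem_coe.1 hy)).2]

theorem card_solvableBox_succ_le {Z : ℕ} (b : ℤ)
    (hZ : ∀ a : Fin n → ℤ, (∀ i, |a i| ≤ L) → (∀ r, ¬ (G.map (specializeTail a)).IsRoot r) →
      (headRoots (G.map (specializeTail a)) L).card ≤ Z) :
    (solvableBox G L).card ≤
      (2 * L + 1) * (solvableBox (G.map (specializeHead b)) L).card + (2 * L + 1) ^ n * Z := by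
  classical
  set box : Finset (Fin n → ℤ) := Fintype.piFinset fun _ => Finset.Icc (-(L : ℤ)) L
  set bad := solvableBox (G.map (specializeHead b)) L
  have hbox {a} : a ∈ box ↔ ∀ i, |a i| ≤ L := by
    simp only [box, Fintype.mem_piFinset, Finset.mem_Icc, abs_le]
  have hcard : box.card = (2 * L + 1) ^ n := by
    rw [Fintype.card_piFinset_const, Int.card_Icc]
    congr 1
    lia
  have hfiber : ∀ a ∈ box, ((solvableBox G L).filter fun x => Fin.tail x = a).card ≤
      (if a ∈ bad then 2 * L + 1 else 0) + Z := fun a ha => by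
    refine (card_filter_tail_eq_le_card_headRoots a).trans ?_
    split_ifs with hbad
    · exact (card_headRoots_le _).trans (Nat.le_add_right _ _)
    · exact (hZ a (hbox.1 ha) fun r hr =>
        hbad (mem_solvableBox_map_specializeHead (hbox.1 ha) hr b)).trans (Nat.le_add_left _ _)
  have hmaps : ∀ x ∈ solvableBox G L, Fin.tail x ∈ box := fun x hx =>
    hbox.2 fun i => (mem_solvableBox.1 hx).1 i.succ
  have hbad : box.filter (· ∈ bad) = bad := by
    ext a
    simpa using fun ha => hbox.2 (mem_solvableBox.1 ha).1
  calc (solvableBox G L).card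
      = ∑ a ∈ box, ((solvableBox G L).filter fun x => Fin.tail x = a).card :=
        Finset.card_eq_sum_card_fiberwise hmaps
    _ ≤ ∑ a ∈ box, ((if a ∈ bad then 2 * L + 1 else 0) + Z) := Finset.sum_le_sum hfiber
    _ = _ := by
        rw [Finset.sum_add_distrib, ← Finset.sum_filter, hbad, Finset.sum_const, Finset.sum_const,
          hcard, smul_eq_mul, smul_eq_mul, mul_comm bad.card]

end SolvableBox

theorem MonicOfSize.exists_card_solvableBox_mul_le (n D : ℕ) :
    ∃ C : ℕ, ∀ {H L ℓ : ℕ} {G : (MvPolynomial (Fin n) ℤ)[X]}, MonicOfSize D H G →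
      (∀ r, ¬ G.IsRoot r) → 1 ≤ L → H * L < 2 ^ ℓ →
      (solvableBox G L).card * L ≤ C * ℓ ^ 4 * L ^ n * (L.sqrt + 1) := by
  induction n with
  | zero => exact ⟨0, fun _ hroot _ _ => by simp [solvableBox_eq_empty hroot]⟩
  | succ n ih =>
    obtain ⟨C, hC⟩ := ih
    obtain ⟨C', hcurve⟩ := exists_card_headRoots_le D
    obtain ⟨c, hc⟩ := exists_specializeHead_forall_not_isRoot D
    refine ⟨3 * (C * (1 + c * D) ^ 4) + 3 ^ n * (C' * (D + 1) ^ 4),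
      fun {H L ℓ G} hG hroot hL hHL => ?_⟩
    have hℓ : 1 ≤ ℓ := Nat.pos_of_ne_zero fun h =>
      absurd (Nat.mul_pos hG.one_le hL) (by rw [h] at hHL; lia)
    obtain ⟨b, hb, hbroot⟩ := hc hG hroot hℓ ((Nat.le_mul_of_pos_right H hL).trans hHL.le)
    have hbad := hC (ℓ := (1 + c * D) * ℓ) (hG.map_specializeHead Nat.one_le_two_pow hb)
      hbroot hL <| calc H * (2 ^ (c * ℓ)) ^ D * L = H * L * (2 ^ (c * ℓ)) ^ D := by ring
        _ < 2 ^ ℓ * (2 ^ (c * ℓ)) ^ D := by gcongr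
        _ = 2 ^ ((1 + c * D) * ℓ) := by ring
    have hgood (a : Fin n → ℤ) (ha : ∀ i, |a i| ≤ L)
        (hroot : ∀ r, ¬ (G.map (specializeTail a)).IsRoot r) :=
      hcurve (ℓ := (D + 1) * ℓ) (hG.map_specializeTail hL ha) hroot hL <|
        calc H * L ^ D * L ≤ H ^ (D + 1) * L ^ D * L := by
              gcongr
              exact le_self_pow₀ hG.one_le D.succ_ne_zero
          _ = (H * L) ^ (D + 1) := by ring
          _ < (2 ^ ℓ) ^ (D + 1) := Nat.pow_lt_pow_left hHL D.succ_ne_zero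
          _ = 2 ^ ((D + 1) * ℓ) := by ring
    have h3L : 2 * L + 1 ≤ 3 * L := by lia
    calc (solvableBox G L).card * L
        ≤ ((2 * L + 1) * (solvableBox (G.map (specializeHead b)) L).card +
            (2 * L + 1) ^ n * (C' * ((D + 1) * ℓ) ^ 4 * (L.sqrt + 1))) * L := by
          gcongr
          exact card_solvableBox_succ_le b hgood
      _ ≤ (3 * L * (solvableBox (G.map (specializeHead b)) L).card +
            (3 * L) ^ n * (C' * ((D + 1) * ℓ) ^ 4 * (L.sqrt + 1))) * L := by gcongr
      _ = 3 * L * ((solvableBox (G.map (specializeHead b)) L).card * L) +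
            (3 * L) ^ n * (C' * ((D + 1) * ℓ) ^ 4 * (L.sqrt + 1)) * L := by ring
      _ ≤ 3 * L * (C * ((1 + c * D) * ℓ) ^ 4 * L ^ n * (L.sqrt + 1)) +
            (3 * L) ^ n * (C' * ((D + 1) * ℓ) ^ 4 * (L.sqrt + 1)) * L := by gcongr
      _ = _ := by ring

/-! ### Integral normalization -/

section IntegralNormalization

variable {n D : ℕ} {F : (MvPolynomial (Fin n) ℤ)[X]} {c : ℤ}

theorem natDegree_le_totalDeg (F : (MvPolynomial (Fin n) ℤ)[X]) : F.natDegree ≤ totalDeg F := by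
  rcases eq_or_ne F 0 with rfl | hF
  · simp
  · exact (Nat.le_add_right _ _).trans (Finset.le_sup (f := fun k => k + (F.coeff k).totalDegree)
      (natDegree_mem_support_of_nonzero hF))

theorem totalDegree_coeff_le_totalDeg (F : (MvPolynomial (Fin n) ℤ)[X]) (j : ℕ) :
    (F.coeff j).totalDegree ≤ totalDeg F := by
  by_cases hj : j ∈ F.support
  · exact (Nat.le_add_left _ _).trans
      (Finset.le_sup (f := fun k => k + (F.coeff k).totalDegree) hj)
  · simp [notMem_support_iff.1 hj]

theorem abs_coeff_le_mvNorm (g : MvPolynomial (Fin n) ℤ) (d : Fin n →₀ ℕ) :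
    |g.coeff d| ≤ mvNorm g := by
  by_cases hd : d ∈ g.support
  · rw [Int.abs_eq_natAbs]
    exact_mod_cast Finset.le_sup (f := fun m => (g.coeff m).natAbs) hd
  · simp [MvPolynomial.notMem_support_iff.1 hd]

theorem mvNorm_coeff_le_polyNorm (F : (MvPolynomial (Fin n) ℤ)[X]) (j : ℕ) :
    mvNorm (F.coeff j) ≤ polyNorm F := by
  by_cases hj : j ∈ F.support
  · exact Finset.le_sup (f := fun k => mvNorm (F.coeff k)) hj
  · simp [notMem_support_iff.1 hj, mvNorm]

theorem card_support_le_of_totalDegree_le {g : MvPolynomial (Fin n) ℤ} (hg : g.totalDegree ≤ D) :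
    g.support.card ≤ (D + 1) ^ n := by
  calc g.support.card ≤ (Fintype.piFinset fun _ : Fin n => Finset.range (D + 1)).card :=
        Finset.card_le_card_of_injOn _ (fun d hd => Fintype.mem_piFinset.2 fun i =>
          Finset.mem_range_succ_iff.2 <| (MvPolynomial.monomial_le_degreeOf i hd).trans
            ((MvPolynomial.degreeOf_le_totalDegree g i).trans hg)) DFunLike.coe_injective.injOn
    _ = (D + 1) ^ n := by rw [Fintype.card_piFinset_const, Finset.card_range]

theorem boundedOnBox_of_totalDegree_le {g : MvPolynomial (Fin n) ℤ} (hg : g.totalDegree ≤ D)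
    {T : ℕ} (hT : 1 ≤ T) : BoundedOnBox T ((D + 1) ^ n * mvNorm g * T ^ D) g := fun x hx => by
  have hterm : ∀ d ∈ g.support, |g.coeff d * ∏ i, x i ^ d i| ≤ mvNorm g * (T : ℤ) ^ D :=
    fun d hd => by
      rw [abs_mul, Finset.abs_prod]
      refine mul_le_mul (abs_coeff_le_mvNorm g d) ?_ (by positivity) (by positivity)
      calc ∏ i, |x i ^ d i| ≤ ∏ i, (T : ℤ) ^ d i := by
            gcongr with i
            rw [abs_pow]
            gcongr
            exact hx i
        _ = (T : ℤ) ^ ∑ i, d i := Finset.prod_pow_eq_pow_sum _ _ _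
        _ ≤ (T : ℤ) ^ D := by
            refine pow_le_pow_right₀ (by exact_mod_cast hT) (le_trans ?_ hg)
            rw [← Finsupp.sum_fintype d (fun _ e => e) fun _ => rfl]
            exact MvPolynomial.le_totalDegree hd
  calc |MvPolynomial.eval x g| = |∑ d ∈ g.support, g.coeff d * ∏ i, x i ^ d i| := by
        rw [MvPolynomial.eval_eq']
    _ ≤ ∑ d ∈ g.support, |g.coeff d * ∏ i, x i ^ d i| := Finset.abs_sum_le_sum_abs _ _
    _ ≤ g.support.card • (mvNorm g * (T : ℤ) ^ D) := Finset.sum_le_card_nsmul _ _ _ hterm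
    _ ≤ ((D + 1) ^ n * mvNorm g * T ^ D : ℕ) := by
        rw [nsmul_eq_mul, mul_assoc]
        push_cast
        gcongr
        exact_mod_cast card_support_le_of_totalDegree_le hg

theorem abs_le_polyNorm_of_leadingCoeff_eq (hlc : F.leadingCoeff = MvPolynomial.C c) :
    |c| ≤ polyNorm F := by
  have h := (abs_coeff_le_mvNorm _ 0).trans
    (Int.ofNat_le.2 (mvNorm_coeff_le_polyNorm F F.natDegree))
  rwa [coeff_natDegree, hlc, MvPolynomial.coeff_zero_C] at h

theorem one_le_polyNorm (hc : c ≠ 0) (hlc : F.leadingCoeff = MvPolynomial.C c) :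
    1 ≤ polyNorm F := by
  exact_mod_cast (Int.one_le_abs hc).trans (abs_le_polyNorm_of_leadingCoeff_eq hlc)

theorem monicOfSize_integralNormalization (hc : c ≠ 0) (hlc : F.leadingCoeff = MvPolynomial.C c)
    (hD : totalDeg F ≤ D) :
    MonicOfSize D ((D + 1) ^ n * polyNorm F ^ (D + 1)) (integralNormalization F) where
  monic := monic_integralNormalization (by rintro rfl; simp [hc, eq_comm] at hlc)
  natDegree_le := natDegree_integralNormalization.trans_le ((natDegree_le_totalDeg F).trans hD)
  totalDegree_coeff_le j := by
    rw [integralNormalization_coeff]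
    split_ifs
    · simp
    · refine (MvPolynomial.totalDegree_mul _ _).trans ?_
      rw [hlc, ← MvPolynomial.C_pow, MvPolynomial.totalDegree_C, add_zero]
      exact (totalDegree_coeff_le_totalDeg F j).trans hD
  boundedOnBox_coeff j T hT x hx := by
    have hN := one_le_polyNorm hc hlc
    rw [integralNormalization_coeff]
    split_ifs
    · rw [map_one, abs_one]
      exact_mod_cast Nat.one_le_iff_ne_zero.2 (by positivity)
    · have hcoeff := boundedOnBox_of_totalDegree_le
        ((totalDegree_coeff_le_totalDeg F j).trans hD) hT x hx
      have hdeg := (natDegree_le_totalDeg F).trans hD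
      rw [hlc, map_mul, map_pow, MvPolynomial.eval_C, abs_mul, abs_pow]
      calc |MvPolynomial.eval x (F.coeff j)| * |c| ^ (F.natDegree - 1 - j)
          ≤ ((D + 1) ^ n * polyNorm F * T ^ D : ℕ) * (polyNorm F : ℤ) ^ D := by
            gcongr
            · exact hcoeff.trans (by gcongr; exact mvNorm_coeff_le_polyNorm F j)
            · have hcN := abs_le_polyNorm_of_leadingCoeff_eq hlc
              exact (pow_le_pow_left₀ (abs_nonneg _) hcN _).trans
                (pow_le_pow_right₀ (by exact_mod_cast hN) (by lia))
        _ = _ := by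
            push_cast
            ring

theorem not_isRoot_integralNormalization (hc : c ≠ 0) (hlc : F.leadingCoeff = MvPolynomial.C c)
    (hroot : ∀ r, ¬ (toQ F).IsRoot r) (r : MvPolynomial (Fin n) ℤ) :
    ¬ (integralNormalization F).IsRoot r := fun hr => by
  set φ : MvPolynomial (Fin n) ℤ →+* MvPolynomial (Fin n) ℚ :=
    MvPolynomial.map (Int.castRingHom ℚ)
  have hcQ : (c : ℚ) ≠ 0 := by exact_mod_cast hc
  have hφc : φ F.leadingCoeff = MvPolynomial.C (c : ℚ) := by
    rw [hlc]
    exact MvPolynomial.map_C _ _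
  set s : MvPolynomial (Fin n) ℚ := MvPolynomial.C (c : ℚ)⁻¹ * φ r
  have hs : φ F.leadingCoeff * s = φ r := by
    rw [hφc, ← mul_assoc, ← MvPolynomial.C_mul, mul_inv_cancel₀ hcQ, MvPolynomial.C_1, one_mul]
  have hdeg : 1 ≤ F.natDegree := Nat.one_le_iff_ne_zero.2 fun h0 => by
    have hmonic := (monicOfSize_integralNormalization hc hlc le_rfl).monic
    rw [hmonic.natDegree_eq_zero.1 (natDegree_integralNormalization.trans h0), IsRoot,
      eval_one] at hr
    exact one_ne_zero hr
  have heval := integralNormalization_eval₂_leadingCoeff_mul hdeg φ s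
  rw [hs, eval₂_at_apply, hr.eq_zero, map_zero, zero_eq_mul, hφc] at heval
  refine heval.elim (pow_ne_zero _ (MvPolynomial.C_ne_zero.2 hcQ)) fun h => hroot s ?_
  rw [IsRoot, toQ, eval_map, h]

theorem solvableBox_subset_integralNormalization (hc : c ≠ 0)
    (hlc : F.leadingCoeff = MvPolynomial.C c) (L : ℕ) :
    solvableBox F L ⊆ solvableBox (integralNormalization F) L := fun x hx => by
  obtain ⟨hxL, y, hy⟩ := mem_solvableBox.1 hx
  have hdeg : 1 ≤ F.natDegree := Nat.one_le_iff_ne_zero.2 fun h0 => by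
    rw [eq_C_of_natDegree_eq_zero h0, ← h0, coeff_natDegree, hlc, map_C, IsRoot, eval_C,
      MvPolynomial.eval_C] at hy
    exact hc hy
  refine mem_solvableBox.2 ⟨hxL, MvPolynomial.eval x F.leadingCoeff * y, ?_⟩
  rw [IsRoot, eval_map, integralNormalization_eval₂_leadingCoeff_mul hdeg, ← eval_map, hy.eq_zero,
    mul_zero]

theorem NFB_le_card_solvableBox (F : (MvPolynomial (Fin n) ℤ)[X]) {B : ℝ} (hB : 0 ≤ B) :
    NFB F B ≤ (solvableBox F ⌊B⌋₊).card := by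
  rw [NFB, ← Set.ncard_coe_finset]
  refine Set.ncard_le_ncard (fun x hx => Finset.mem_coe.2 (mem_solvableBox.2 ⟨fun i => ?_, hx.2⟩))
    (Finset.finite_toSet _)
  rw [Int.abs_eq_natAbs]
  refine Int.ofNat_le.2 ((Nat.le_floor_iff hB).2 ?_)
  rw [Nat.cast_natAbs, Int.cast_abs]
  exact hx.1 i

end IntegralNormalization

theorem natDegree_toQ {n : ℕ} (F : (MvPolynomial (Fin n) ℤ)[X]) :
    (toQ F).natDegree = F.natDegree :=
  natDegree_map_eq_of_injective (MvPolynomial.map_injective _ Int.cast_injective) F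

/-! ### Logarithms and the final count -/

theorem one_le_log_of_three_le {x : ℝ} (hx : 3 ≤ x) : 1 ≤ Real.log x :=
  (Real.le_log_iff_exp_le (by linarith)).2 (Real.exp_one_lt_three.le.trans hx)

theorem exists_natLog_add_one_le {K : ℕ} (hK : 1 ≤ K) (k : ℕ) :
    ∃ C > 0, ∀ {N L : ℕ} {B : ℝ}, 1 ≤ N → 1 ≤ L → L ≤ B → 3 ≤ B →
      ((Nat.log 2 (K * N ^ k * L) + 1 : ℕ) : ℝ) ≤ C * (Real.log (N + 2) * Real.log B) := by
  refine ⟨2 * (Real.log K + k + 1) + 1, by positivity, fun {N L B} hN hL hLB hB => ?_⟩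
  have hN' : (1 : ℝ) ≤ N := by exact_mod_cast hN
  have hL' : (0 : ℝ) < L := by exact_mod_cast hL
  have ha : 1 ≤ Real.log (N + 2) := one_le_log_of_three_le (by linarith)
  have hb : 1 ≤ Real.log B := one_le_log_of_three_le hB
  have hlogN : Real.log N ≤ Real.log (N + 2) := Real.log_le_log (by linarith) (by linarith)
  have hlogL : Real.log L ≤ Real.log B := Real.log_le_log hL' hLB
  have hlog2 : 1 / 2 ≤ Real.log 2 := by linarith [Real.log_two_gt_d9]
  set a := Real.log (N + 2)
  set b := Real.log B
  have hab : 1 ≤ a * b := one_le_mul_of_one_le_of_one_le ha hb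
  have hlogQ : Real.log (K * N ^ k * L : ℕ) ≤ (Real.log K + k + 1) * (a * b) := by
    push_cast
    rw [Real.log_mul (by positivity) hL'.ne', Real.log_mul (by positivity) (by positivity),
      Real.log_pow]
    calc Real.log K + k * Real.log N + Real.log L
        ≤ Real.log K * (a * b) + k * (a * b) + a * b := by
          gcongr
          · exact le_mul_of_one_le_right (by positivity) hab
          · exact hlogN.trans (le_mul_of_one_le_right (by linarith) hb)
          · exact hlogL.trans (le_mul_of_one_le_left (by linarith) ha)
      _ = _ := by ring
  have hnat : (Nat.log 2 (K * N ^ k * L) : ℝ) ≤ 2 * Real.log (K * N ^ k * L : ℕ) := by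
    refine (Real.natLog_le_logb _ 2).trans ?_
    rw [Real.logb, Nat.cast_two, div_le_iff₀ (by linarith)]
    nlinarith [Real.log_natCast_nonneg (K * N ^ k * L)]
  push_cast at hnat hlogQ ⊢
  linarith

theorem le_mul_rpow_of_mul_floor_le {S A n : ℕ} {B : ℝ} (hB : 1 ≤ B)
    (h : S * ⌊B⌋₊ ≤ A * ⌊B⌋₊ ^ n * (⌊B⌋₊.sqrt + 1)) :
    (S : ℝ) ≤ 4 * A * B ^ ((n : ℝ) - 1 / 2) := by
  set L := ⌊B⌋₊
  have hLB : (L : ℝ) ≤ B := Nat.floor_le (by linarith)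
  have hL : (1 : ℝ) ≤ L := by exact_mod_cast Nat.le_floor (by exact_mod_cast hB)
  have hBL : B ≤ 2 * L := by linarith [Nat.lt_floor_add_one B]
  have hsqrt : (L.sqrt : ℝ) + 1 ≤ 2 * √B := by
    linarith [Real.nat_sqrt_le_real_sqrt.trans (Real.sqrt_le_sqrt hLB), Real.one_le_sqrt.2 hB]
  have hpow : B ^ n * √B = B ^ ((n : ℝ) - 1 / 2) * B := by
    rw [Real.sqrt_eq_rpow, ← Real.rpow_natCast, ← Real.rpow_add (by linarith),
      ← Real.rpow_add_one (by linarith)]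
    congr 1
    ring
  refine le_of_mul_le_mul_right ?_ (by linarith : 0 < B)
  calc (S : ℝ) * B ≤ S * (2 * L) := by gcongr
    _ = 2 * (S * L : ℕ) := by push_cast; ring
    _ ≤ 2 * (A * L ^ n * (L.sqrt + 1) : ℕ) := by gcongr
    _ = 2 * (A * L ^ n * (L.sqrt + 1)) := by push_cast; rfl
    _ ≤ 2 * (A * B ^ n * (2 * √B)) := by gcongr
    _ = 4 * A * (B ^ n * √B) := by ring
    _ = 4 * A * B ^ ((n : ℝ) - 1 / 2) * B := by rw [hpow]; ring

theorem statement5_general (n D : ℕ) :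
    ∃ C : ℝ, 0 < C ∧ ∀ F : (MvPolynomial (Fin n) ℤ)[X], (∀ r, ¬ (toQ F).IsRoot r) →
      (∃ c : ℤ, c ≠ 0 ∧ F.leadingCoeff = MvPolynomial.C c) → totalDeg F ≤ D →
      ∀ B : ℝ, 3 ≤ B → (NFB F B : ℝ) ≤
        C * Real.log ((polyNorm F : ℝ) + 2) ^ 4 * B ^ ((n : ℝ) - 1 / 2) * Real.log B ^ 4 := by
  obtain ⟨C, hC⟩ := MonicOfSize.exists_card_solvableBox_mul_le n D
  obtain ⟨C', hC', hlog⟩ := exists_natLog_add_one_le (Nat.one_le_pow n (D + 1) D.succ_pos) (D + 1)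
  refine ⟨4 * (C + 1) * C' ^ 4, by positivity, fun F hroot ⟨c, hc, hlc⟩ hD B hB => ?_⟩
  have hL : 1 ≤ ⌊B⌋₊ := Nat.le_floor (by push_cast; linarith)
  have hcount := hC (monicOfSize_integralNormalization hc hlc hD)
    (not_isRoot_integralNormalization hc hlc hroot) hL (Nat.lt_pow_succ_log_self one_lt_two _)
  have hℓ := hlog (one_le_polyNorm hc hlc) hL (Nat.floor_le (by linarith)) hB
  set ℓ := Nat.log 2 ((D + 1) ^ n * polyNorm F ^ (D + 1) * ⌊B⌋₊) + 1
  calc (NFB F B : ℝ) ≤ (solvableBox (integralNormalization F) ⌊B⌋₊).card := by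
        exact_mod_cast (NFB_le_card_solvableBox F (by linarith)).trans
          (Finset.card_le_card (solvableBox_subset_integralNormalization hc hlc _))
    _ ≤ 4 * (C * ℓ ^ 4 : ℕ) * B ^ ((n : ℝ) - 1 / 2) :=
        le_mul_rpow_of_mul_floor_le (by linarith) hcount
    _ ≤ 4 * ((C + 1) * (C' * (Real.log (polyNorm F + 2) * Real.log B)) ^ 4) *
          B ^ ((n : ℝ) - 1 / 2) := by
        push_cast
        gcongr
        · exact le_add_of_nonneg_right zero_le_one
    _ = _ := by ring

theorem statement5 (n : ℕ) (hn : 1 ≤ n) :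
    ∃ e : ℕ, 1 ≤ e ∧ ∀ D : ℕ, ∃ C : ℝ, 0 < C ∧
      ∀ F : Polynomial (MvPolynomial (Fin n) ℤ),
        Irreducible (toQ F) → 2 ≤ F.natDegree →
        (∃ c : ℤ, c ≠ 0 ∧ F.leadingCoeff = MvPolynomial.C c) →
        totalDeg F = D →
        ∀ B : ℝ, 3 ≤ B →
          (NFB F B : ℝ) ≤
            C * Real.log ((polyNorm F : ℝ) + 2) ^ e * B ^ ((n : ℝ) - 1 / 2) *
              Real.log B ^ e :=
  ⟨4, by norm_num, fun D => (statement5_general n D).imp fun _ ⟨hC, hbound⟩ =>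
    ⟨hC, fun F hirr hdeg hlead hD => hbound F (fun _ => hirr.not_isRoot_of_natDegree_ne_one
      (by rw [natDegree_toQ]; lia)) hlead hD.le⟩⟩
end
end

section
/- Fix integers n ≥ 1 and D ≥ 1. Let F ∈ ℤ[X₁,…,Xₙ] be a polynomial of total degree D that is absolutely irreducible (irreducible in ℚ̄[X₁,…,Xₙ]), with ‖F‖ ≥ 3. Then there exists a finite set E of primes with |E| ≤ C(n,D) · log‖F‖ / log log‖F‖, for a constant C(n,D) depending only on n and D, such that for every prime p ∉ E the reduction of F modulo p has total degree D and is irreducible in 𝔽̄_p[X₁,…,Xₙ]. -/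
open Polynomial

noncomputable section

/-!
If a polynomial over `R` factors as `G * H` over a domain extending `R`, every product of a
coefficient of `G` with a coefficient of `H` is integral over `R`: by Gauss's lemma these products
lie in each valuation ring containing `R`. A homomorphism from `R` to an algebraically closed field
therefore extends to the ring generated by these products, and carries the factorization along.
Applied to the product of two generic polynomials of degrees at most `a` and `b`, this shows that
the polynomials over any algebraically closed field admitting such a factorization are exactly those
whose coefficients satisfy all the integer relations among the coefficients of the generic product.

If `F` is irreducible over an algebraic closure of `ℚ`, then one of finitely many generators of the
ideal of these relations takes a nonzero value at the coefficients of `F`. That value is an integer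
of size at most `‖F‖ ^ B`, and if `F` becomes reducible modulo `p` without dropping in degree, then
`p` divides it. A nonzero integer of size at most `‖F‖ ^ B` with `x` prime factors satisfies
`x! ≤ ‖F‖ ^ B`, which gives the bound on `x` by Stirling's formula.
-/

theorem exists_mvPolynomial_map_eq_of_coeff_mem_range {σ R S : Type*} [CommSemiring R]
    [CommSemiring S] (f : R →+* S) {P : MvPolynomial σ S} (h : ∀ m, P.coeff m ∈ f.rangeS) :
    ∃ Q : MvPolynomial σ R, MvPolynomial.map f Q = P := by
  refine MvPolynomial.mem_range_map_iff_coeffs_subset.mpr fun x hx => ?_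
  obtain ⟨m, -, rfl⟩ := MvPolynomial.mem_coeffs_iff.mp hx
  exact h m

theorem totalDegree_le_totalDegree_of_support_subset {σ R S : Type*} [CommSemiring R]
    [CommSemiring S] {P : MvPolynomial σ R} {Q : MvPolynomial σ S} (h : P.support ⊆ Q.support) :
    P.totalDegree ≤ Q.totalDegree :=
  Finset.sup_mono h

theorem exists_isUnit_coeff_mul {σ A : Type*} [CommRing A] [IsLocalRing A] {P Q : MvPolynomial σ A}
    (hP : ∃ m, IsUnit (P.coeff m)) (hQ : ∃ m, IsUnit (Q.coeff m)) :
    ∃ m, IsUnit ((P * Q).coeff m) := by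
  have unit_coeff_iff (R : MvPolynomial σ A) :
      (∃ m, IsUnit (R.coeff m)) ↔ MvPolynomial.map (IsLocalRing.residue A) R ≠ 0 := by
    simp only [MvPolynomial.ne_zero_iff, MvPolynomial.coeff_map,
      IsLocalRing.residue_ne_zero_iff_isUnit]
  -- Gauss's lemma: polynomials over the residue field form a domain.
  rw [unit_coeff_iff] at hP hQ ⊢
  rw [map_mul]
  exact mul_ne_zero hP hQ

section ValuationSubring

variable {L : Type*} [Field L]

theorem exists_primitive_part (V : ValuationSubring L) {σ : Type*} {P : MvPolynomial σ L}
    (hP : P ≠ 0) :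
    ∃ (c : L) (Q : MvPolynomial σ V), P = MvPolynomial.C c * MvPolynomial.map V.subtype Q ∧
      ∃ m, IsUnit (Q.coeff m) := by
  obtain ⟨i, hi, hmax⟩ := P.support.exists_max_image (fun m => V.valuation (P.coeff m))
    (MvPolynomial.support_nonempty.mpr hP)
  have hc : P.coeff i ≠ 0 := MvPolynomial.mem_support_iff.mp hi
  have hmem (m : σ →₀ ℕ) : (P.coeff i)⁻¹ * P.coeff m ∈ V := by
    rw [← V.valuation_le_one_iff, map_mul, map_inv₀, inv_mul_le_iff₀ (by simpa [zero_lt_iff]),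
      mul_one]
    by_cases hm : m ∈ P.support
    · exact hmax m hm
    · simp [MvPolynomial.notMem_support_iff.mp hm]
  obtain ⟨Q, hQ⟩ := exists_mvPolynomial_map_eq_of_coeff_mem_range V.subtype
    (P := MvPolynomial.C (P.coeff i)⁻¹ * P) fun m => by
      rw [MvPolynomial.coeff_C_mul]; exact ⟨⟨_, hmem m⟩, rfl⟩
  refine ⟨P.coeff i, Q, ?_, i, ?_⟩
  · rw [hQ, ← mul_assoc, ← MvPolynomial.C_mul, mul_inv_cancel₀ hc, MvPolynomial.C_1, one_mul]
  · have hQi := congrArg (MvPolynomial.coeff i) hQ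
    rw [MvPolynomial.coeff_map, MvPolynomial.coeff_C_mul, inv_mul_cancel₀ hc] at hQi
    have : Q.coeff i = 1 := Subtype.ext hQi
    rw [this]
    exact isUnit_one

theorem coeff_mul_coeff_mem_valuationSubring (V : ValuationSubring L) {σ : Type*}
    {G H : MvPolynomial σ L} (h : ∀ m, (G * H).coeff m ∈ V) (i j : σ →₀ ℕ) :
    G.coeff i * H.coeff j ∈ V := by
  rcases eq_or_ne G 0 with rfl | hG
  · simp [V.zero_mem]
  rcases eq_or_ne H 0 with rfl | hH
  · simp [V.zero_mem]
  obtain ⟨c, G', rfl, hG'⟩ := exists_primitive_part V hG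
  obtain ⟨d, H', rfl, hH'⟩ := exists_primitive_part V hH
  obtain ⟨m, u, hu⟩ := exists_isUnit_coeff_mul hG' hH'
  have hcdu : c * d * (u : V) ∈ V := by
    have hm := h m
    rwa [mul_mul_mul_comm, ← MvPolynomial.C_mul, ← map_mul, MvPolynomial.coeff_C_mul,
      MvPolynomial.coeff_map, ← hu] at hm
  have hcd : c * d ∈ V := by
    have hu1 : ((u : V) : L) * ((↑u⁻¹ : V) : L) = 1 := congrArg Subtype.val u.mul_inv
    simpa only [mul_assoc, hu1, mul_one] using V.mul_mem _ _ hcdu (↑u⁻¹ : V).2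
  simp only [MvPolynomial.coeff_C_mul, MvPolynomial.coeff_map, ValuationSubring.subtype_apply,
    mul_mul_mul_comm c]
  exact V.mul_mem _ _ hcd (V.mul_mem _ _ (G'.coeff i).2 (H'.coeff j).2)

theorem isIntegral_of_forall_mem_valuationSubring {R : Type*} [CommRing R] [Algebra R L] {x : L}
    (h : ∀ V : ValuationSubring L, (algebraMap R L).range ≤ V.toSubring → x ∈ V) :
    IsIntegral R x := by
  have hx : x ∈ (integralClosure (algebraMap R L).range L).toSubring := by
    rw [← (algebraMap R L).range.closure_eq, ← iInf_valuationSubring_superset, Subring.mem_iInf]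
    exact fun V => h V.1 V.2
  exact isIntegral_trans (R := R) (A := (⊥ : Subalgebra R L)) x hx

end ValuationSubring

theorem isIntegral_coeff_mul_coeff {σ R T : Type*} [CommRing R] [CommRing T] [IsDomain T]
    [Algebra R T] {P : MvPolynomial σ R} {G H : MvPolynomial σ T}
    (h : MvPolynomial.map (algebraMap R T) P = G * H) (i j : σ →₀ ℕ) :
    IsIntegral R (G.coeff i * H.coeff j) := by
  let L := FractionRing T
  rw [← isIntegral_algebraMap_iff (IsFractionRing.injective T L), map_mul,
    ← MvPolynomial.coeff_map, ← MvPolynomial.coeff_map]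
  refine isIntegral_of_forall_mem_valuationSubring fun V hV =>
    coeff_mul_coeff_mem_valuationSubring V (fun m => hV ⟨P.coeff m, ?_⟩) i j
  rw [← map_mul, ← h, MvPolynomial.map_map, ← IsScalarTower.algebraMap_eq, MvPolynomial.coeff_map]

theorem exists_ringHom_comp_algebraMap_eq {R T K : Type*} [CommRing R] [CommRing T] [IsDomain T]
    [Algebra R T] [Algebra.IsIntegral R T] [Field K] [IsAlgClosed K] (φ : R →+* K)
    (hφ : RingHom.ker (algebraMap R T) ≤ RingHom.ker φ) :
    ∃ ψ : T →+* K, ψ.comp (algebraMap R T) = φ := by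
  have : (RingHom.ker φ).IsPrime := RingHom.ker_isPrime φ
  obtain ⟨Q, hQ, hQφ⟩ := Ideal.exists_ideal_over_prime_of_isIntegral_of_isDomain (S := T)
    (RingHom.ker φ) hφ
  have : Q.LiesOver (RingHom.ker φ) := ⟨hQφ.symm⟩
  let : Algebra (R ⧸ RingHom.ker φ) K := (RingHom.kerLift φ).toAlgebra
  have : FaithfulSMul (R ⧸ RingHom.ker φ) K :=
    (faithfulSMul_iff_algebraMap_injective _ _).mpr (RingHom.kerLift_injective φ)
  have : Module.IsTorsionFree (R ⧸ RingHom.ker φ) (T ⧸ Q) :=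
    Module.isTorsionFree_iff_algebraMap_injective.mpr
      (FaithfulSMul.algebraMap_injective (R ⧸ RingHom.ker φ) (T ⧸ Q))
  let lift : T ⧸ Q →ₐ[R ⧸ RingHom.ker φ] K := IsAlgClosed.lift
  exact ⟨lift.toRingHom.comp (Ideal.Quotient.mk Q), RingHom.ext fun r =>
    lift.commutes (Ideal.Quotient.mk _ r)⟩

theorem exists_mul_eq_map_of_coeff_mul_coeff_mem_range {σ A T K : Type*} [CommRing A] [CommRing T]
    [Field K] {f : A →+* T} (hf : Function.Injective f) (ψ : A →+* K) {P : MvPolynomial σ A}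
    {G H : MvPolynomial σ T} (hP : MvPolynomial.map f P = G * H)
    (hGH : ∀ i j, G.coeff i * H.coeff j ∈ f.range) :
    ∃ G' H' : MvPolynomial σ K, G'.support ⊆ G.support ∧ H'.support ⊆ H.support ∧
      G' * H' = MvPolynomial.map ψ P := by
  classical
  choose e he using hGH
  by_cases hψ : ∀ i j, ψ (e i j) = 0
  · have hcoeff (m : σ →₀ ℕ) :
        P.coeff m = ∑ x ∈ Finset.HasAntidiagonal.antidiagonal m, e x.1 x.2 := by
      apply hf
      simp only [← MvPolynomial.coeff_map, hP, MvPolynomial.coeff_mul, map_sum, he]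
    refine ⟨0, 0, by simp, by simp, MvPolynomial.ext _ _ fun m => ?_⟩
    simp [MvPolynomial.coeff_map, hcoeff, hψ]
  push Not at hψ
  obtain ⟨i, j, hij⟩ := hψ
  -- Clearing denominators: `H_j G` and `G_i H` have coefficients in `A`, and their product is
  -- `G_i H_j P`, whose factor `G_i H_j` survives under `ψ`.
  obtain ⟨G₁, hG₁⟩ := exists_mvPolynomial_map_eq_of_coeff_mem_range f (P := H.coeff j • G)
    fun m => ⟨e m j, by rw [he, MvPolynomial.coeff_smul, smul_eq_mul, mul_comm]⟩
  obtain ⟨H₁, hH₁⟩ := exists_mvPolynomial_map_eq_of_coeff_mem_range f (P := G.coeff i • H)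
    fun m => ⟨e i m, by rw [he, MvPolynomial.coeff_smul, smul_eq_mul]⟩
  have hmul : G₁ * H₁ = e i j • P := by
    apply MvPolynomial.map_injective f hf
    rw [map_mul, hG₁, hH₁, smul_mul_smul_comm, MvPolynomial.smul_eq_C_mul _ (e i j), map_mul,
      MvPolynomial.map_C, he, hP, ← MvPolynomial.smul_eq_C_mul, mul_comm (H.coeff j)]
  have support_map_subset {Q : MvPolynomial σ A} {R : MvPolynomial σ T} {c : T}
      (h : MvPolynomial.map f Q = c • R) : (MvPolynomial.map ψ Q).support ⊆ R.support :=
    calc (MvPolynomial.map ψ Q).support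
      _ ⊆ Q.support := MvPolynomial.support_map_subset ψ Q
      _ = (c • R).support := by rw [← h, MvPolynomial.support_map_of_injective Q hf]
      _ ⊆ R.support := MvPolynomial.support_smul
  refine ⟨(ψ (e i j))⁻¹ • MvPolynomial.map ψ G₁, MvPolynomial.map ψ H₁,
    MvPolynomial.support_smul.trans (support_map_subset hG₁), support_map_subset hH₁, ?_⟩
  rw [smul_mul_assoc, ← map_mul, hmul, MvPolynomial.smul_eq_C_mul _ (e i j), map_mul,
    MvPolynomial.map_C, ← MvPolynomial.smul_eq_C_mul, inv_smul_smul₀ hij]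

theorem exists_mul_eq_map_of_ker_le {σ R T K : Type*} [CommRing R] [CommRing T] [IsDomain T]
    [Field K] [IsAlgClosed K] {f : R →+* T} {φ : R →+* K} (hφ : RingHom.ker f ≤ RingHom.ker φ)
    {P : MvPolynomial σ R} {G H : MvPolynomial σ T} (hP : MvPolynomial.map f P = G * H) :
    ∃ G' H' : MvPolynomial σ K, G'.support ⊆ G.support ∧ H'.support ⊆ H.support ∧
      G' * H' = MvPolynomial.map φ P := by
  let : Algebra R T := f.toAlgebra
  let A := integralClosure R T
  obtain ⟨ψ, hψ⟩ := exists_ringHom_comp_algebraMap_eq (T := A) φ fun r hr =>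
    hφ (congrArg (algebraMap A T) hr)
  have hPA : MvPolynomial.map (algebraMap A T) (MvPolynomial.map (algebraMap R A) P) = G * H := by
    rw [MvPolynomial.map_map, ← IsScalarTower.algebraMap_eq, ← hP, RingHom.algebraMap_toAlgebra]
  rw [← hψ, ← MvPolynomial.map_map]
  exact exists_mul_eq_map_of_coeff_mul_coeff_mem_range Subtype.val_injective ψ hPA fun i j =>
    ⟨⟨_, isIntegral_coeff_mul_coeff hP i j⟩, rfl⟩

/-- The exponents of the monomials of total degree at most `d` in finitely many variables. -/
def exponentsLE (σ : Type*) [Finite σ] (d : ℕ) : Finset (σ →₀ ℕ) :=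
  (Finsupp.finite_of_degree_le d).toFinset

section Generic

variable {σ : Type*} [Finite σ] {d : ℕ}

theorem mem_exponentsLE {m : σ →₀ ℕ} : m ∈ exponentsLE σ d ↔ m.degree ≤ d := by
  simp [exponentsLE]

/-- The generic polynomial of degree at most `d`, whose coefficients are independent variables. -/
def genericPoly (σ : Type*) [Finite σ] (d : ℕ) :
    MvPolynomial σ (MvPolynomial (exponentsLE σ d) ℤ) :=
  ∑ m : exponentsLE σ d, MvPolynomial.monomial m.1 (MvPolynomial.X m)

theorem totalDegree_genericPoly_le : (genericPoly σ d).totalDegree ≤ d :=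
  MvPolynomial.totalDegree_finsetSum_le fun m _ =>
    (MvPolynomial.totalDegree_monomial_le _ _).trans (mem_exponentsLE.mp m.2)

variable {A : Type*} [CommRing A]

/-- Evaluation of integer polynomials in the coefficients of the generic polynomial of degree at
most `d` at the coefficients of `F`. -/
def coeffEval (d : ℕ) (F : MvPolynomial σ A) : MvPolynomial (exponentsLE σ d) ℤ →+* A :=
  MvPolynomial.eval₂Hom (Int.castRingHom A) fun m => F.coeff m

theorem coeffEval_map {B : Type*} [CommRing B] (f : A →+* B) (F : MvPolynomial σ A) :
    coeffEval d (MvPolynomial.map f F) = f.comp (coeffEval d F) :=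
  MvPolynomial.ringHom_ext' (RingHom.ext_int _ _) fun m => by
    simp [coeffEval, MvPolynomial.coeff_map]

theorem coeffEval_eq_eval (F : MvPolynomial σ ℤ) (P : MvPolynomial (exponentsLE σ d) ℤ) :
    coeffEval d F P = MvPolynomial.eval (fun m : exponentsLE σ d => F.coeff m) P := by
  rw [coeffEval, MvPolynomial.eval, RingHom.ext_int (Int.castRingHom ℤ) (RingHom.id ℤ)]

theorem map_coeffEval_genericPoly {F : MvPolynomial σ A} (hF : F.totalDegree ≤ d) :
    MvPolynomial.map (coeffEval d F) (genericPoly σ d) = F := by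
  have hsupp : F.support ⊆ exponentsLE σ d := fun m hm =>
    mem_exponentsLE.mpr ((MvPolynomial.le_totalDegree hm).trans hF)
  simp only [genericPoly, map_sum, MvPolynomial.map_monomial, coeffEval, MvPolynomial.coe_eval₂Hom,
    MvPolynomial.eval₂_X]
  rw [Finset.sum_coe_sort (exponentsLE σ d) fun m => MvPolynomial.monomial m (F.coeff m),
    ← Finset.sum_subset hsupp fun m _ hm => by simp [MvPolynomial.notMem_support_iff.mp hm]]
  exact F.support_sum_monomial_coeff

end Generic

section FactorIdeal

variable (σ : Type*) [Finite σ]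

/-- The generic polynomial of degree at most `a`, with coefficients in the polynomial ring whose
variables are the coefficients of two generic polynomials, of degrees at most `a` and `b`. -/
def genericLeftFactor (a b : ℕ) :
    MvPolynomial σ (MvPolynomial (exponentsLE σ a ⊕ exponentsLE σ b) ℤ) :=
  MvPolynomial.map (MvPolynomial.rename Sum.inl).toRingHom (genericPoly σ a)

/-- The generic polynomial of degree at most `b`, over the same ring as `genericLeftFactor`. -/
def genericRightFactor (a b : ℕ) :
    MvPolynomial σ (MvPolynomial (exponentsLE σ a ⊕ exponentsLE σ b) ℤ) :=
  MvPolynomial.map (MvPolynomial.rename Sum.inr).toRingHom (genericPoly σ b)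

/-- The integer polynomial relations satisfied by the coefficients, up to degree `D`, of every
product of a polynomial of degree at most `a` with one of degree at most `b`. -/
def factorIdeal (D a b : ℕ) : Ideal (MvPolynomial (exponentsLE σ D) ℤ) :=
  RingHom.ker (coeffEval D (genericLeftFactor σ a b * genericRightFactor σ a b))

/-- The integer polynomial relations satisfied by the coefficients of every product of two
polynomials of degrees at most `a` and `b`, for all positive `a` and `b` with `a + b = D`. Over an
algebraically closed field they cut out the reducible polynomials among those of degree `D`. -/
def reducibilityIdeal (D : ℕ) : Ideal (MvPolynomial (exponentsLE σ D) ℤ) :=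
  ((Finset.HasAntidiagonal.antidiagonal D).filter fun x => x.1 ≠ 0 ∧ x.2 ≠ 0).inf fun x =>
    factorIdeal σ D x.1 x.2

variable {σ} {D a b : ℕ}

theorem factorIdeal_le_ker_coeffEval_mul {A : Type*} [CommRing A] {G H : MvPolynomial σ A}
    (hG : G.totalDegree ≤ a) (hH : H.totalDegree ≤ b) :
    factorIdeal σ D a b ≤ RingHom.ker (coeffEval D (G * H)) := by
  let θ : MvPolynomial (exponentsLE σ a ⊕ exponentsLE σ b) ℤ →+* A :=
    MvPolynomial.eval₂Hom (Int.castRingHom A)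
      (Sum.elim (fun i => G.coeff i) fun j => H.coeff j)
  have hθl : θ.comp (MvPolynomial.rename Sum.inl).toRingHom = coeffEval a G :=
    MvPolynomial.ringHom_ext' (RingHom.ext_int _ _) fun m => by simp [θ, coeffEval]
  have hθr : θ.comp (MvPolynomial.rename Sum.inr).toRingHom = coeffEval b H :=
    MvPolynomial.ringHom_ext' (RingHom.ext_int _ _) fun m => by simp [θ, coeffEval]
  have hGH : G * H = MvPolynomial.map θ (genericLeftFactor σ a b * genericRightFactor σ a b) := by
    rw [map_mul, genericLeftFactor, genericRightFactor, MvPolynomial.map_map, MvPolynomial.map_map,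
      hθl, hθr, map_coeffEval_genericPoly hG, map_coeffEval_genericPoly hH]
  rw [hGH, coeffEval_map, ← RingHom.comap_ker]
  exact Ideal.comap_mono bot_le

theorem exists_mul_eq_of_factorIdeal_le {K : Type*} [Field K] [IsAlgClosed K]
    {F : MvPolynomial σ K} (hab : a + b ≤ D) (hF : F.totalDegree ≤ D)
    (h : factorIdeal σ D a b ≤ RingHom.ker (coeffEval D F)) :
    ∃ G H : MvPolynomial σ K, G.totalDegree ≤ a ∧ H.totalDegree ≤ b ∧ G * H = F := by
  have hL : (genericLeftFactor σ a b).totalDegree ≤ a :=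
    (totalDegree_le_totalDegree_of_support_subset
      (MvPolynomial.support_map_subset _ _)).trans totalDegree_genericPoly_le
  have hR : (genericRightFactor σ a b).totalDegree ≤ b :=
    (totalDegree_le_totalDegree_of_support_subset
      (MvPolynomial.support_map_subset _ _)).trans totalDegree_genericPoly_le
  have hLR : (genericLeftFactor σ a b * genericRightFactor σ a b).totalDegree ≤ D :=
    (MvPolynomial.totalDegree_mul _ _).trans ((add_le_add hL hR).trans hab)
  obtain ⟨G, H, hG, hH, hGH⟩ :=
    exists_mul_eq_map_of_ker_le h (map_coeffEval_genericPoly hLR)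
  exact ⟨G, H, (totalDegree_le_totalDegree_of_support_subset hG).trans hL,
    (totalDegree_le_totalDegree_of_support_subset hH).trans hR,
    hGH.trans (map_coeffEval_genericPoly hF)⟩

end FactorIdeal

section Irreducibility

variable {σ K : Type*} [Field K]

theorem totalDegree_ne_zero_of_not_isUnit {P : MvPolynomial σ K} (hP : P ≠ 0) (hu : ¬ IsUnit P) :
    P.totalDegree ≠ 0 := fun h => by
  rw [MvPolynomial.totalDegree_eq_zero_iff_eq_C] at h
  refine hu (h ▸ (isUnit_iff_ne_zero.mpr fun h0 => hP ?_).map MvPolynomial.C)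
  rw [h, h0, MvPolynomial.C_0]

theorem not_irreducible_iff_exists_mul_eq {F : MvPolynomial σ K} (hF : F.totalDegree ≠ 0) :
    ¬ Irreducible F ↔ ∃ a b, a + b = F.totalDegree ∧ a ≠ 0 ∧ b ≠ 0 ∧
      ∃ G H : MvPolynomial σ K, G.totalDegree ≤ a ∧ H.totalDegree ≤ b ∧ G * H = F := by
  have hFu : ¬ IsUnit F := fun h => hF (MvPolynomial.isUnit_iff_totalDegree_of_isReduced.mp h).2
  constructor
  · intro h
    simp only [irreducible_iff, hFu, not_false_eq_true, true_and, not_forall, not_or] at h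
    obtain ⟨G, H, rfl, hG, hH⟩ := h
    have hGH : G * H ≠ 0 := fun h => hF (by rw [h, MvPolynomial.totalDegree_zero])
    have hG0 := left_ne_zero_of_mul hGH
    have hH0 := right_ne_zero_of_mul hGH
    exact ⟨_, _, (MvPolynomial.totalDegree_mul_of_isDomain hG0 hH0).symm,
      totalDegree_ne_zero_of_not_isUnit hG0 hG, totalDegree_ne_zero_of_not_isUnit hH0 hH,
      G, H, le_rfl, le_rfl, rfl⟩
  · rintro ⟨a, b, hab, ha, hb, G, H, hG, hH, rfl⟩ hirr
    have hdeg := MvPolynomial.totalDegree_mul G H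
    rcases hirr.isUnit_or_isUnit rfl with hu | hu
    all_goals
      have := (MvPolynomial.isUnit_iff_totalDegree_of_isReduced.mp hu).2
      omega

variable [Finite σ] {F : MvPolynomial σ K} {D : ℕ}

theorem reducibilityIdeal_le_of_not_irreducible (hF : F.totalDegree = D) (hD : D ≠ 0)
    (h : ¬ Irreducible F) : reducibilityIdeal σ D ≤ RingHom.ker (coeffEval D F) := by
  obtain ⟨a, b, hab, ha, hb, G, H, hG, hH, rfl⟩ :=
    (not_irreducible_iff_exists_mul_eq (hF ▸ hD)).mp h
  have hmem : (a, b) ∈ (Finset.HasAntidiagonal.antidiagonal D).filter fun x =>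
      x.1 ≠ 0 ∧ x.2 ≠ 0 :=
    Finset.mem_filter.mpr ⟨Finset.HasAntidiagonal.mem_antidiagonal.mpr (hab.trans hF), ha, hb⟩
  exact (Finset.inf_le hmem).trans (factorIdeal_le_ker_coeffEval_mul hG hH)

theorem not_irreducible_of_reducibilityIdeal_le [IsAlgClosed K] (hF : F.totalDegree = D)
    (hD : D ≠ 0) (h : reducibilityIdeal σ D ≤ RingHom.ker (coeffEval D F)) :
    ¬ Irreducible F := by
  obtain ⟨⟨a, b⟩, hab, hle⟩ :=
    (Ideal.IsPrime.inf_le' (RingHom.ker_isPrime (coeffEval D F))).mp h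
  simp only [Finset.mem_filter, Finset.HasAntidiagonal.mem_antidiagonal] at hab
  exact (not_irreducible_iff_exists_mul_eq (hF ▸ hD)).mpr ⟨a, b, hab.1.trans hF.symm, hab.2.1,
    hab.2.2, exists_mul_eq_of_factorIdeal_le hab.1.le hF.le hle⟩

end Irreducibility

theorem exists_natAbs_eval_le_pow {ι : Type*} (P : MvPolynomial ι ℤ) :
    ∃ B : ℕ, ∀ (x : ι → ℤ) (M : ℕ), 2 ≤ M → (∀ i, (x i).natAbs ≤ M) →
      (MvPolynomial.eval x P).natAbs ≤ M ^ B := by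
  induction P using MvPolynomial.induction_on with
  | C c =>
    refine ⟨c.natAbs, fun x M hM _ => ?_⟩
    simpa using (Nat.lt_pow_self hM).le
  | add P Q hP hQ =>
    obtain ⟨B₁, h₁⟩ := hP
    obtain ⟨B₂, h₂⟩ := hQ
    refine ⟨B₁ + B₂ + 1, fun x M hM hx => ?_⟩
    have hM0 : 0 < M := by omega
    rw [map_add]
    calc (MvPolynomial.eval x P + MvPolynomial.eval x Q).natAbs
      _ ≤ M ^ B₁ + M ^ B₂ := (Int.natAbs_add_le _ _).trans
        (add_le_add (h₁ x M hM hx) (h₂ x M hM hx))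
      _ ≤ M ^ (B₁ + B₂) + M ^ (B₁ + B₂) := by gcongr <;> omega
      _ = M ^ (B₁ + B₂) * 2 := by ring
      _ ≤ M ^ (B₁ + B₂ + 1) := by rw [pow_succ]; gcongr
  | mul_X P i hP =>
    obtain ⟨B, hB⟩ := hP
    refine ⟨B + 1, fun x M hM hx => ?_⟩
    rw [map_mul, Int.natAbs_mul, pow_succ, MvPolynomial.eval_X]
    exact Nat.mul_le_mul (hB x M hM hx) (hx i)

theorem exists_degree_eq_totalDegree_coeff_ne_zero {σ R : Type*} [CommSemiring R]
    {F : MvPolynomial σ R} (hF : F ≠ 0) : ∃ m, m.degree = F.totalDegree ∧ F.coeff m ≠ 0 := by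
  obtain ⟨m, hm, hdeg⟩ := F.support.exists_mem_eq_sup (MvPolynomial.support_nonempty.mpr hF)
    Finsupp.degree
  exact ⟨m, hdeg.symm, MvPolynomial.mem_support_iff.mp hm⟩

theorem totalDegree_map_eq_of_map_coeff_ne_zero {σ R S : Type*} [CommSemiring R]
    [CommSemiring S] (f : R →+* S) {F : MvPolynomial σ R} {m : σ →₀ ℕ}
    (hm : m.degree = F.totalDegree) (h : f (F.coeff m) ≠ 0) :
    (MvPolynomial.map f F).totalDegree = F.totalDegree := by
  refine (totalDegree_le_totalDegree_of_support_subset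
    (MvPolynomial.support_map_subset f F)).antisymm (hm ▸ MvPolynomial.le_totalDegree ?_)
  rwa [MvPolynomial.mem_support_iff, MvPolynomial.coeff_map]

theorem exists_natAbs_le_pow_forall_irreducible_map (σ : Type*) [Finite σ] (D : ℕ) (k : Type*)
    [Field k] [IsAlgClosed k] [CharZero k] :
    ∃ B : ℕ, ∀ (F : MvPolynomial σ ℤ) (M : ℕ), 2 ≤ M → (∀ m, (F.coeff m).natAbs ≤ M) →
      F.totalDegree = D → Irreducible (MvPolynomial.map (Int.castRingHom k) F) →
      ∃ N : ℤ, N ≠ 0 ∧ N.natAbs ≤ M ^ B ∧ ∀ (K : Type*) [Field K], (N : K) ≠ 0 →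
        (MvPolynomial.map (Int.castRingHom K) F).totalDegree = D ∧
          Irreducible (MvPolynomial.map (Int.castRingHom K) F) := by
  obtain ⟨S, hS⟩ := (isNoetherianRing_iff_ideal_fg _).mp inferInstance (reducibilityIdeal σ D)
  choose B hB using exists_natAbs_eval_le_pow (ι := exponentsLE σ D)
  refine ⟨S.sup B + 1, fun F M hM hFM hFD hirr => ?_⟩
  have hFk : (MvPolynomial.map (Int.castRingHom k) F).totalDegree = D := by
    rw [← hFD, MvPolynomial.totalDegree, MvPolynomial.totalDegree,
      MvPolynomial.support_map_of_injective _ (Int.castRingHom k).injective_int]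
  have hD : D ≠ 0 := hFk ▸ totalDegree_ne_zero_of_not_isUnit hirr.ne_zero hirr.not_isUnit
  obtain ⟨m, hm, hFm⟩ := exists_degree_eq_totalDegree_coeff_ne_zero (F := F)
    fun h => hirr.ne_zero (by rw [h, map_zero])
  obtain ⟨P, hPS, hP⟩ : ∃ P ∈ S, coeffEval D F P ≠ 0 := by
    by_contra! h
    refine not_irreducible_of_reducibilityIdeal_le hFk hD ?_ hirr
    rw [← hS, Ideal.span_le]
    intro P hP
    simp [coeffEval_map, h P hP]
  have hPM : (coeffEval D F P).natAbs ≤ M ^ S.sup B :=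
    calc (coeffEval D F P).natAbs
      _ ≤ M ^ B P := by rw [coeffEval_eq_eval]; exact hB P _ M hM fun m => hFM m
      _ ≤ M ^ S.sup B := Nat.pow_le_pow_right (by omega) (Finset.le_sup hPS)
  refine ⟨coeffEval D F P * F.coeff m, mul_ne_zero hP hFm, ?_, fun K _ hN => ?_⟩
  · rw [Int.natAbs_mul, pow_succ]
    exact Nat.mul_le_mul hPM (hFM m)
  rw [Int.cast_mul] at hN
  have hFK : (MvPolynomial.map (Int.castRingHom K) F).totalDegree = D := hFD ▸
    totalDegree_map_eq_of_map_coeff_ne_zero _ hm (right_ne_zero_of_mul hN)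
  refine ⟨hFK, by_contra fun h => left_ne_zero_of_mul hN ?_⟩
  have hPK : P ∈ RingHom.ker (coeffEval D (MvPolynomial.map (Int.castRingHom K) F)) :=
    reducibilityIdeal_le_of_not_irreducible hFK hD h (hS.le (Ideal.subset_span hPS))
  rwa [RingHom.mem_ker, coeffEval_map] at hPK

theorem factorial_card_le_prod {s : Finset ℕ} (hs : ∀ x ∈ s, 0 < x) :
    s.card.factorial ≤ ∏ x ∈ s, x := by
  induction s using Finset.induction_on_max with
  | empty => simp
  | insert a s ha ih =>
    have has : a ∉ s := fun h => lt_irrefl _ (ha a h)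
    rw [Finset.card_insert_of_notMem has, Finset.prod_insert has, Nat.factorial_succ]
    refine Nat.mul_le_mul ?_ (ih fun x hx => hs x (Finset.mem_insert_of_mem hx))
    have hsub : insert a s ⊆ Finset.Icc 1 a := fun x hx => Finset.mem_Icc.mpr ⟨hs x hx, by
      rcases Finset.mem_insert.mp hx with rfl | hx
      exacts [le_rfl, (ha x hx).le]⟩
    simpa [Finset.card_insert_of_notMem has] using Finset.card_le_card hsub

theorem mul_log_sub_self_le_log_factorial (n : ℕ) :
    n * Real.log n - n ≤ Real.log n.factorial := by
  rcases eq_or_ne n 0 with rfl | hn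
  · simp
  have hn1 : (1 : ℝ) ≤ n := by exact_mod_cast Nat.one_le_iff_ne_zero.mpr hn
  have hπ : 0 ≤ Real.log (2 * Real.pi) := Real.log_nonneg (by linarith [Real.pi_gt_three])
  linarith [Stirling.le_log_factorial_stirling hn, Real.log_nonneg hn1]

theorem le_mul_div_log_of_mul_log_sub_self_le {b x L : ℝ} (hL : 1 < L) (hb : 0 ≤ b)
    (h : x * Real.log x - x ≤ b * L) : x ≤ (2 * b + 2 * Real.exp 1) * L / Real.log L := by
  have hsqrt : 0 < √L := Real.sqrt_pos.mpr (by linarith)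
  have hlog : Real.log L = 2 * Real.log √L := by rw [Real.log_sqrt (by linarith)]; ring
  have he : 0 < Real.exp 1 := Real.exp_pos 1
  have hbL : 0 ≤ b * L := by positivity
  rw [le_div_iff₀ (Real.log_pos hL)]
  -- Beyond the cut `e * √L`, `log x - 1` is at least half of `log L`.
  rcases le_or_gt x (Real.exp 1 * √L) with hx | hx
  · have hlog_le : Real.log L ≤ 2 * √L := by linarith [Real.log_le_self hsqrt.le]
    calc x * Real.log L
      _ ≤ Real.exp 1 * √L * (2 * √L) := by gcongr; exact (Real.log_pos hL).le
      _ = 2 * Real.exp 1 * (√L * √L) := by ring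
      _ = 2 * Real.exp 1 * L := by rw [Real.mul_self_sqrt (by linarith)]
      _ ≤ (2 * b + 2 * Real.exp 1) * L := by linarith
  · have hx0 : 0 < x := lt_trans (by positivity) hx
    have hlog_ge : 1 + Real.log L / 2 ≤ Real.log x := by
      calc 1 + Real.log L / 2
        _ = Real.log (Real.exp 1 * √L) := by
          rw [Real.log_mul he.ne' hsqrt.ne', Real.log_exp, hlog]; ring
        _ ≤ Real.log x := Real.log_le_log (by positivity) hx.le
    calc x * Real.log L
      _ = 2 * (x * (1 + Real.log L / 2) - x) := by ring
      _ ≤ 2 * (x * Real.log x - x) := by gcongr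
      _ ≤ 2 * (b * L) := by gcongr
      _ ≤ (2 * b + 2 * Real.exp 1) * L := by nlinarith

theorem card_primeFactors_le_mul_log_div_log_log {N M B : ℕ} (hN : N ≠ 0) (hM : 3 ≤ M)
    (h : N ≤ M ^ B) :
    (N.primeFactors.card : ℝ) ≤
      (2 * B + 2 * Real.exp 1) * Real.log M / Real.log (Real.log M) := by
  have hlogM : 1 < Real.log M := by
    have hM' : (3 : ℝ) ≤ M := by exact_mod_cast hM
    rw [Real.lt_log_iff_exp_lt (by linarith)]
    linarith [Real.exp_one_lt_d9]
  have hfact : N.primeFactors.card.factorial ≤ M ^ B :=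
    calc N.primeFactors.card.factorial
      _ ≤ ∏ p ∈ N.primeFactors, p :=
        factorial_card_le_prod fun p hp => (Nat.prime_of_mem_primeFactors hp).pos
      _ ≤ N := Nat.le_of_dvd hN.bot_lt (Nat.prod_primeFactors_dvd N)
      _ ≤ M ^ B := h
  refine le_mul_div_log_of_mul_log_sub_self_le hlogM B.cast_nonneg
    ((mul_log_sub_self_le_log_factorial _).trans ?_)
  rw [← Real.log_pow]
  exact Real.log_le_log (by positivity) (by exact_mod_cast hfact)

theorem natAbs_coeff_le_mvNorm {n : ℕ} (F : MvPolynomial (Fin n) ℤ) (m : Fin n →₀ ℕ) :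
    (F.coeff m).natAbs ≤ mvNorm F := by
  by_cases hm : m ∈ F.support
  · exact Finset.le_sup (f := fun m => (F.coeff m).natAbs) hm
  · simp [MvPolynomial.notMem_support_iff.mp hm]

theorem statement6_general (σ : Type*) [Finite σ] (D : ℕ) (k : Type*) [Field k] [IsAlgClosed k]
    [CharZero k] :
    ∃ C : ℝ, 0 < C ∧ ∀ (F : MvPolynomial σ ℤ) (M : ℕ), 3 ≤ M →
      (∀ m, (F.coeff m).natAbs ≤ M) → F.totalDegree = D →
      Irreducible (MvPolynomial.map (Int.castRingHom k) F) →
      ∃ E : Finset ℕ, (∀ p ∈ E, p.Prime) ∧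
        (E.card : ℝ) ≤ C * Real.log M / Real.log (Real.log M) ∧
        ∀ p : ℕ, p.Prime → p ∉ E → ∀ (K : Type*) [Field K] [CharP K p],
          (MvPolynomial.map (Int.castRingHom K) F).totalDegree = D ∧
            Irreducible (MvPolynomial.map (Int.castRingHom K) F) := by
  obtain ⟨B, hB⟩ := exists_natAbs_le_pow_forall_irreducible_map σ D k
  refine ⟨2 * B + 2 * Real.exp 1, by positivity, fun F M hM hFM hFD hirr => ?_⟩
  obtain ⟨N, hN, hNM, hNF⟩ := hB F M (by omega) hFM hFD hirr
  have hN' : N.natAbs ≠ 0 := Int.natAbs_ne_zero.mpr hN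
  refine ⟨N.natAbs.primeFactors, fun p => Nat.prime_of_mem_primeFactors,
    card_primeFactors_le_mul_log_div_log_log hN' hM hNM, fun p hp hpE K _ _ => hNF K ?_⟩
  rw [Ne, CharP.intCast_eq_zero_iff K p, Int.natCast_dvd]
  exact fun hpN => hpE (Nat.mem_primeFactors.mpr ⟨hp, hpN, hN'⟩)

theorem statement6 (n D : ℕ) (hn : 1 ≤ n) (hD : 1 ≤ D) :
    ∃ C : ℝ, 0 < C ∧
      ∀ F : MvPolynomial (Fin n) ℤ,
        F.totalDegree = D →
        Irreducible (MvPolynomial.map (Int.castRingHom (AlgebraicClosure ℚ)) F) →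
        3 ≤ mvNorm F →
        ∃ E : Finset ℕ, (∀ p ∈ E, p.Prime) ∧
          (E.card : ℝ) ≤
            C * Real.log (mvNorm F : ℝ) / Real.log (Real.log (mvNorm F : ℝ)) ∧
          ∀ p : ℕ, ∀ hp : p.Prime, p ∉ E →
            (MvPolynomial.map (Int.castRingHom (ZMod p)) F).totalDegree = D ∧
            (haveI : Fact p.Prime := ⟨hp⟩;
              Irreducible (MvPolynomial.map (Int.castRingHom (AlgebraicClosure (ZMod p))) F)) := by
  obtain ⟨C, hC, h⟩ := statement6_general (Fin n) D (AlgebraicClosure ℚ)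
  refine ⟨C, hC, fun F hFD hirr hM => ?_⟩
  obtain ⟨E, hE, hcard, hred⟩ := h F (mvNorm F) hM (natAbs_coeff_le_mvNorm F) hFD hirr
  refine ⟨E, hE, hcard, fun p hp hpE => ?_⟩
  have : Fact p.Prime := ⟨hp⟩
  exact ⟨(hred p hp hpE (ZMod p)).1, (hred p hp hpE (AlgebraicClosure (ZMod p))).2⟩
end
end
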